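/- arXiv:2601.10238 — 3 statements merged into one kernel-verified Lean document; each statement's English description precedes it below -/
import Mathlib

section
/- Let k ≥ 5 be an integer, let G be a graph and let v be a vertex of G. If the subgraph of G induced on the second neighbourhood of v contains a path on 2k vertices as a subgraph, then G contains a cycle on k vertices as a subgraph. -/
/-- `G` has a copy in `C`: there is an injective graph homomorphism from `G` to `C`,
i.e. `C` contains `G` as a (not necessarily induced) subgraph. -/
def HasCopy {α β : Type*} (G : SimpleGraph α) (C : SimpleGraph β) : Prop :=
  ∃ f : G →g C, Function.Injective f

/-- The Ramsey number `R(G, H)`: the least `N` such that every red-blue colouring of the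
edges of `K_N` (encoded by the graph `C` of red edges) contains a red copy of `G` or a
blue copy of `H`. -/
noncomputable def ramseyNumber {α β : Type*} (G : SimpleGraph α) (H : SimpleGraph β) : ℕ :=
  sInf {N : ℕ | ∀ C : SimpleGraph (Fin N), HasCopy G C ∨ HasCopy H Cᶜ}
/-- The second neighbourhood of `v` in `G`: the vertices outside `N(v) ∪ {v}` that are
adjacent to some vertex of `N(v)`. -/
def secondNeighborSet {V : Type*} (G : SimpleGraph V) (v : V) : Set V :=
  {w | w ∉ G.neighborSet v ∧ w ≠ v ∧ ∃ u ∈ G.neighborSet v, G.Adj u w}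

/-!
Suppose `G` has no cycle of length `k = m + 4`, and let `p₀, p₁, …` be the path in the second
neighbourhood of `v`. Distinct common neighbours `a` of `v` and `pᵢ`, and `b` of `v` and `pᵢ₊ₘ`,
would close `pᵢ, …, pᵢ₊ₘ, b, v, a` to a `k`-cycle, so every common neighbour of `v` and `pᵢ` is
also one of `v` and `pᵢ₊ₘ`. On the other hand no vertex off the path is adjacent to both `pᵢ` and
`pᵢ₊ₘ₊₂`.

Let `a` and `b` be common neighbours of `v` with `p₀` and `p₂` respectively. Then `a` is adjacent to
`p₀, pₘ, p₂ₘ`, and `b` to `p₂, pₘ₊₂`. If `a` were adjacent to `p₂`, it would be adjacent to both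
`p₀` and `pₘ₊₂`, which is impossible. Hence `m ≠ 1` and `a ≠ b`, and
`p₀, p₁, p₂, b, pₘ₊₂, …, p₂ₘ, a` is a `k`-cycle after all.
-/

section Cycles

open SimpleGraph

variable {V : Type*} {G : SimpleGraph V}

theorem hasCopy_iff_isContained {W : Type*} {H : SimpleGraph W} : HasCopy G H ↔ G ⊑ H :=
  ⟨fun ⟨f, hf⟩ ↦ ⟨⟨f, hf⟩⟩, fun ⟨f⟩ ↦ ⟨f.toHom, f.injective⟩⟩

theorem exists_isPath_of_hasCopy_pathGraph {n : ℕ} (h : HasCopy (pathGraph (n + 1)) G) :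
    ∃ (x y : V) (p : G.Walk x y), p.IsPath ∧ p.length = n := by
  obtain ⟨f, hf⟩ := h
  have hchain : (List.ofFn f).IsChain G.Adj :=
    List.isChain_ofFn.mpr fun i _ ↦ f.map_adj (pathGraph_adj.mpr (.inl rfl))
  refine ⟨_, _, .ofSupport (List.ofFn f) (by simp) hchain, ?_, by simp⟩
  rw [Walk.isPath_def, Walk.support_ofSupport]
  exact List.nodup_ofFn.mpr hf

theorem exists_isPath_of_hasCopy_pathGraph_induce {s : Set V} {n : ℕ}
    (h : HasCopy (pathGraph (n + 1)) (G.induce s)) :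
    ∃ (x y : V) (p : G.Walk x y), p.IsPath ∧ p.length = n ∧ ∀ w ∈ p.support, w ∈ s := by
  obtain ⟨x, y, p, hp, hlen⟩ := exists_isPath_of_hasCopy_pathGraph h
  refine ⟨_, _, p.map (Embedding.induce s).toHom,
    hp.map Subtype.val_injective, (Walk.length_map _ p).trans hlen, fun w hw ↦ ?_⟩
  rw [Walk.support_map, List.mem_map] at hw
  obtain ⟨w, -, rfl⟩ := hw
  exact w.2

theorem exists_isPath_getVert {x y : V} {p : G.Walk x y} (hp : p.IsPath) {i j : ℕ} (hij : i ≤ j)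
    (hj : j ≤ p.length) :
    ∃ q : G.Walk (p.getVert i) (p.getVert j),
      q.IsPath ∧ q.length = j - i ∧ q.support ⊆ p.support ∧
        ∀ w ∈ q.support, w ∈ p.getVert '' Set.Icc i j := by
  have hend : (p.drop i).getVert (j - i) = p.getVert j := by
    rw [Walk.drop_getVert, Nat.add_sub_cancel' hij]
  have hsub : ((p.drop i).take (j - i)).IsSubwalk p :=
    (Walk.isSubwalk_take _ _).trans (Walk.isSubwalk_drop _ _)
  refine ⟨((p.drop i).take (j - i)).copy rfl hend, ?_, ?_, ?_, fun w hw ↦ ?_⟩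
  · simpa using Walk.isPath_of_isSubwalk hsub hp
  · rw [Walk.length_copy, Walk.take_length, Walk.drop_length]
    omega
  · simpa using hsub.support_subset
  · rw [Walk.support_copy, Walk.mem_support_iff_exists_getVert] at hw
    obtain ⟨l, rfl, -⟩ := hw
    rw [Walk.take_getVert, Walk.drop_getVert]
    exact ⟨_, ⟨by omega, by omega⟩, rfl⟩

theorem hasCopy_cycleGraph_of_disjoint {x y x' y' : V} {q : G.Walk x y} {r : G.Walk x' y'}
    (hq : q.IsPath) (hr : r.IsPath) (hqr : q.support.Disjoint r.support) (hyx' : G.Adj y x')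
    (hy'x : G.Adj y' x) (hlen : 0 < q.length + r.length) :
    HasCopy (cycleGraph (q.length + r.length + 2)) G := by
  rw [hasCopy_iff_isContained, cycleGraph_isContained_iff (by omega)]
  have hq' : (Walk.cons hy'x q).IsPath :=
    hq.cons fun h ↦ hqr h r.end_mem_support
  have hr' : (Walk.cons hyx' r).IsPath :=
    hr.cons fun h ↦ hqr q.end_mem_support h
  refine ⟨y', (Walk.cons hy'x q).append (Walk.cons hyx' r), hq'.isCycle_append hr' ?_ ?_, ?_⟩
  · simpa using hqr
  · simp only [Walk.length_cons]
    omega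
  · simp only [Walk.length_append, Walk.length_cons]
    omega

theorem hasCopy_cycleGraph_of_adj_ends {x y u : V} {q : G.Walk x y} (hq : q.IsPath)
    (hu : u ∉ q.support) (hux : G.Adj u x) (huy : G.Adj u y) (hlen : 0 < q.length) :
    HasCopy (cycleGraph (q.length + 2)) G :=
  hasCopy_cycleGraph_of_disjoint hq (Walk.IsPath.nil (u := u)) (by simpa using hu) huy.symm hux hlen

theorem hasCopy_cycleGraph_of_crossing {x y x' y' a b : V} {q : G.Walk x y}
    {q' : G.Walk x' y'} (hq : q.IsPath) (hq' : q'.IsPath) (hqq' : q.support.Disjoint q'.support)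
    (hab : a ≠ b) (haq : a ∉ q.support) (haq' : a ∉ q'.support) (hbq : b ∉ q.support)
    (hbq' : b ∉ q'.support) (hax : G.Adj a x) (hby : G.Adj b y) (hbx' : G.Adj b x')
    (hay' : G.Adj a y') :
    HasCopy (cycleGraph (q.length + q'.length + 4)) G := by
  have hr : (Walk.cons hbx' (q'.concat hay'.symm)).IsPath :=
    (hq'.concat haq' hay'.symm).cons (by simp [hbq', hab.symm])
  have hdisj : q.support.Disjoint (Walk.cons hbx' (q'.concat hay'.symm)).support := by
    simp [hqq', haq, hbq]
  have hcycle := hasCopy_cycleGraph_of_disjoint hq hr hdisj hby.symm hax (by simp)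
  rwa [Walk.length_cons, Walk.length_concat] at hcycle

theorem hasCopy_cycleGraph_of_adj_getVert {x y a : V} {p : G.Walk x y} (hp : p.IsPath)
    (ha : a ∉ p.support) {i j : ℕ} (hij : i < j) (hj : j ≤ p.length) (hai : G.Adj a (p.getVert i))
    (haj : G.Adj a (p.getVert j)) :
    HasCopy (cycleGraph (j - i + 2)) G := by
  obtain ⟨q, hq, hlen, hsub, -⟩ := exists_isPath_getVert hp hij.le hj
  rw [← hlen]
  exact hasCopy_cycleGraph_of_adj_ends hq (fun haq ↦ ha (hsub haq)) hai haj (by omega)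

theorem hasCopy_cycleGraph_of_crossing_getVert {x y a b : V} {p : G.Walk x y} (hp : p.IsPath)
    (hab : a ≠ b) (ha : a ∉ p.support) (hb : b ∉ p.support) {i j i' j' : ℕ} (hij : i ≤ j)
    (hji' : j < i') (hij' : i' ≤ j') (hj' : j' ≤ p.length) (hai : G.Adj a (p.getVert i))
    (hbj : G.Adj b (p.getVert j)) (hbi' : G.Adj b (p.getVert i')) (haj' : G.Adj a (p.getVert j')) :
    HasCopy (cycleGraph (j - i + (j' - i') + 4)) G := by
  obtain ⟨q, hq, hlen, hsub, hseg⟩ := exists_isPath_getVert hp hij (by omega)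
  obtain ⟨q', hq', hlen', hsub', hseg'⟩ := exists_isPath_getVert hp hij' hj'
  have hdisj : q.support.Disjoint q'.support := fun w hw hw' ↦ by
    obtain ⟨l, ⟨-, hl⟩, rfl⟩ := hseg w hw
    obtain ⟨l', ⟨hl', hl'j'⟩, heq⟩ := hseg' _ hw'
    have : l' = l := hp.getVert_injOn (hl'j'.trans hj') (show l ≤ p.length by omega) heq
    omega
  rw [← hlen, ← hlen']
  exact hasCopy_cycleGraph_of_crossing hq hq' hdisj hab (fun h ↦ ha (hsub h))
    (fun h ↦ ha (hsub' h)) (fun h ↦ hb (hsub h)) (fun h ↦ hb (hsub' h)) hai hbj hbi' haj'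

end Cycles

section SecondNeighborhood

open SimpleGraph

variable {V : Type*} {G : SimpleGraph V} {v : V}

theorem commonNeighbors_nonempty_of_mem_secondNeighborSet {w : V}
    (hw : w ∈ secondNeighborSet G v) : (G.commonNeighbors v w).Nonempty :=
  let ⟨u, hvu, huw⟩ := hw.2.2
  ⟨u, hvu, huw.symm⟩

variable {x y : V} {q : G.Walk x y}

theorem notMem_support_of_mem_neighborSet (hs : ∀ w ∈ q.support, w ∈ secondNeighborSet G v) {a : V}
    (ha : a ∈ G.neighborSet v) : a ∉ q.support :=
  fun h ↦ (hs a h).1 ha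

theorem hasCopy_cycleGraph_of_ne_of_mem_commonNeighbors (hq : q.IsPath)
    (hs : ∀ w ∈ q.support, w ∈ secondNeighborSet G v) {a b : V} (hab : a ≠ b)
    (ha : a ∈ G.commonNeighbors v x) (hb : b ∈ G.commonNeighbors v y) :
    HasCopy (cycleGraph (q.length + 4)) G :=
  hasCopy_cycleGraph_of_crossing hq (Walk.IsPath.nil (u := v))
    (by simpa using fun h ↦ (hs v h).2.1 rfl) hab
    (notMem_support_of_mem_neighborSet hs ha.1) (by simpa using ha.1.ne')
    (notMem_support_of_mem_neighborSet hs hb.1) (by simpa using hb.1.ne')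
    ha.2.symm hb.2.symm hb.1.symm ha.1.symm

theorem mem_commonNeighbors_of_not_hasCopy_cycleGraph (hq : q.IsPath)
    (hs : ∀ w ∈ q.support, w ∈ secondNeighborSet G v)
    (hG : ¬ HasCopy (cycleGraph (q.length + 4)) G) {a : V} (ha : a ∈ G.commonNeighbors v x) :
    a ∈ G.commonNeighbors v y := by
  obtain ⟨b, hb⟩ := commonNeighbors_nonempty_of_mem_secondNeighborSet (hs y q.end_mem_support)
  by_contra hay
  have hab : a ≠ b := by
    rintro rfl
    exact hay hb
  exact hG (hasCopy_cycleGraph_of_ne_of_mem_commonNeighbors hq hs hab ha hb)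

theorem mem_commonNeighbors_getVert_add {p : G.Walk x y} (hp : p.IsPath)
    (hs : ∀ w ∈ p.support, w ∈ secondNeighborSet G v) {m : ℕ}
    (hG : ¬ HasCopy (cycleGraph (m + 4)) G) {i : ℕ} (hi : i + m ≤ p.length) {a : V}
    (ha : a ∈ G.commonNeighbors v (p.getVert i)) :
    a ∈ G.commonNeighbors v (p.getVert (i + m)) := by
  obtain ⟨q, hq, hlen, hsub, -⟩ := exists_isPath_getVert hp (Nat.le_add_right i m) hi
  rw [Nat.add_sub_cancel_left] at hlen
  exact mem_commonNeighbors_of_not_hasCopy_cycleGraph hq (fun w hw ↦ hs w (hsub hw))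
    (by rwa [hlen]) ha

theorem hasCopy_cycleGraph_of_isPath_secondNeighborSet {p : G.Walk x y} (hp : p.IsPath)
    (hs : ∀ w ∈ p.support, w ∈ secondNeighborSet G v) {m : ℕ} (hm : 0 < m)
    (hlen : m + 2 ≤ p.length) (hlen' : 2 * m ≤ p.length) :
    HasCopy (cycleGraph (m + 4)) G := by
  by_contra hG
  have shift {i : ℕ} (hi : i + m ≤ p.length) {c : V} :=
    mem_commonNeighbors_getVert_add hp hs hG hi (a := c)
  have exists_common (i : ℕ) : (G.commonNeighbors v (p.getVert i)).Nonempty :=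
    commonNeighbors_nonempty_of_mem_secondNeighborSet (hs _ (p.getVert_mem_support i))
  obtain ⟨a, ha₀⟩ := exists_common 0
  obtain ⟨b, hb₂⟩ := exists_common 2
  have ha : a ∉ p.support := notMem_support_of_mem_neighborSet hs ha₀.1
  have hb : b ∉ p.support := notMem_support_of_mem_neighborSet hs hb₂.1
  have ha₂ : a ∉ G.commonNeighbors v (p.getVert 2) := fun ha₂ ↦
    hG (hasCopy_cycleGraph_of_adj_getVert hp ha (j := m + 2) (by omega) hlen ha₀.2.symm
      (Nat.add_comm 2 m ▸ (shift (by omega) ha₂).2.symm))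
  have ha₂ₘ : a ∈ G.commonNeighbors v (p.getVert (2 * m)) := by
    have haₘ : a ∈ G.commonNeighbors v (p.getVert (0 + m)) := shift (by omega) ha₀
    have := shift (by omega) haₘ
    rwa [zero_add, ← two_mul] at this
  have hm_ne_one : m ≠ 1 := by
    rintro rfl
    exact ha₂ ha₂ₘ
  have hab : a ≠ b := by
    rintro rfl
    exact ha₂ hb₂
  have hcycle := hasCopy_cycleGraph_of_crossing_getVert hp hab ha hb (Nat.zero_le 2)
    (show 2 < 2 + m by omega) (show 2 + m ≤ 2 * m by omega) hlen' ha₀.2.symm hb₂.2.symm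
    (shift (by omega) hb₂).2.symm ha₂ₘ.2.symm
  rw [show 2 - 0 + (2 * m - (2 + m)) + 4 = m + 4 by omega] at hcycle
  exact hG hcycle

end SecondNeighborhood

/-- The cycle is found inside `v`, two of its neighbours and the vertices `p₀, …, pⱼ` of the path,
where `j = max (2 * k - 8) (k - 2)`. -/
theorem stmt_6_general (k n : ℕ) (hk : 5 ≤ k) (hkn : k ≤ n + 1) (hkn' : 2 * k ≤ n + 7) (V : Type*)
    (G : SimpleGraph V) (v : V)
    (h : HasCopy (SimpleGraph.pathGraph n) (G.induce (secondNeighborSet G v))) :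
    HasCopy (SimpleGraph.cycleGraph k) G := by
  obtain ⟨m, rfl⟩ := Nat.exists_eq_add_of_le' (show 4 ≤ k by omega)
  obtain ⟨l, rfl⟩ := Nat.exists_eq_add_of_le' (show 1 ≤ n by omega)
  obtain ⟨x, y, p, hp, rfl, hs⟩ := exists_isPath_of_hasCopy_pathGraph_induce h
  exact hasCopy_cycleGraph_of_isPath_secondNeighborSet hp hs (by omega) (by omega) (by omega)

theorem stmt_6 (k : ℕ) (hk : 5 ≤ k) (V : Type*) (G : SimpleGraph V) (v : V)
    (h : HasCopy (SimpleGraph.pathGraph (2 * k)) (G.induce (secondNeighborSet G v))) :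
    HasCopy (SimpleGraph.cycleGraph k) G :=
  stmt_6_general k (2 * k) hk (by omega) (by omega) V G v h
end

section
/- For all integers m ≥ k ≥ 3, the Ramsey number of the cycle on k vertices versus the matching of m edges satisfies R(C_k, m·K₂) = 2m + ⌊(k−1)/2⌋. -/
/-- The matching `m·K₂`: `m` pairwise vertex-disjoint edges. -/
def matchingGraph (m : ℕ) : SimpleGraph (Fin m × Fin 2) where
  Adj a b := a.1 = b.1 ∧ a.2 ≠ b.2
  symm := ⟨fun _ _ h => ⟨h.1.symm, h.2.symm⟩⟩
  loopless := ⟨fun _ h => h.2 rfl⟩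

/-!
Lower bound: colour red every edge meeting a fixed set `S` with fewer vertices than a vertex cover
of `G`. There is no red `G`, and a blue `H` has to avoid `S`; so `R(G, H) ≥ τ(G) - 1 + |H|`. Using
this for both orders of the pair gives `2m + ⌊(k-1)/2⌋` and `k + m - 1`.

Upper bound: without a blue `m·K₂`, the Tutte–Berge formula provides a set whose deletion leaves
more than `⌊(k-1)/2⌋ + 1` blue components on at least `k` vertices. All edges between distinct
components are red. If every component has at most `⌊(k-1)/2⌋` vertices, a red `C_k` is obtained by
listing the vertices component by component and alternating between the first and the second half
of the list; otherwise a large component is alternated with vertices from distinct other components.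
-/

open SimpleGraph Function

theorem exists_injective_fin_of_le_ncard {α : Type*} {s : Set α} [Finite s] {n : ℕ}
    (h : n ≤ s.ncard) : ∃ f : Fin n → α, Injective f ∧ ∀ i, f i ∈ s :=
  ⟨fun i ↦ (Finite.equivFin s).symm (Fin.castLE h i), Subtype.val_injective.comp
    ((Equiv.injective _).comp (Fin.castLE_injective h)), fun _ ↦ Subtype.prop _⟩

section Arrows

variable {α β V : Type*} {G : SimpleGraph α} {H : SimpleGraph β}

theorem hasCopy_iff_isContained_s8 {C : SimpleGraph V} : HasCopy G C ↔ G ⊑ C :=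
  ⟨fun ⟨f, hf⟩ ↦ ⟨⟨f, hf⟩⟩, fun ⟨f⟩ ↦ ⟨f.toHom, f.injective⟩⟩

/-- The arrow relation `K_V → (G, H)` of Ramsey theory: every red-blue colouring of the edges of
the complete graph on `V`, given by its graph `C` of red edges, contains a red `G` or a
blue `H`. -/
def Arrows (V : Type*) (G : SimpleGraph α) (H : SimpleGraph β) : Prop :=
  ∀ C : SimpleGraph V, G ⊑ C ∨ H ⊑ Cᶜ

theorem ramseyNumber_eq_sInf_arrows : ramseyNumber G H = sInf {N | Arrows (Fin N) G H} := by
  simp only [ramseyNumber, Arrows, hasCopy_iff_isContained_s8]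

theorem Arrows.symm (h : Arrows V G H) : Arrows V H G := fun C ↦ by
  simpa only [compl_compl, or_comm] using h Cᶜ

-- All edges meeting `S` are red, so `S` covers the red graph and every blue `H` avoids `S`.
theorem Arrows.card_le_ncard_compl [Finite V] (h : Arrows V G H) (hH : ∀ v, ¬ H.IsIsolated v)
    {S : Set V} (hS : S.encard < G.vertexCoverNum) : Nat.card β ≤ Sᶜ.ncard := by
  let C : SimpleGraph V := SimpleGraph.fromRel fun x _ ↦ x ∈ S
  have hcover : C.IsVertexCover S := fun x y hxy ↦ ((fromRel_adj _ x y).1 hxy).2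
  rcases h C with hred | ⟨⟨f⟩⟩
  · exact absurd (hred.vertexCoverNum_le_vertexCoverNum.trans hcover.vertexCoverNum_le) hS.not_ge
  · have havoid (v : β) : f v ∈ Sᶜ := fun hv ↦ by
      obtain ⟨w, hvw⟩ := exists_adj_iff_not_isIsolated.2 (hH v)
      have hblue := f.toHom.map_adj hvw
      exact ((compl_adj _ _ _).1 hblue).2 ((fromRel_adj _ _ _).2 ⟨hblue.ne, Or.inl hv⟩)
    rw [← Nat.card_coe_set_eq]
    exact Nat.card_le_card_of_injective (fun v ↦ (⟨f v, havoid v⟩ : (Sᶜ : Set V)))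
      fun v w hvw ↦ f.injective (congrArg Subtype.val hvw)

theorem Arrows.add_card_le [Finite V] [Finite β] [Nonempty β] (h : Arrows V G H)
    (hH : ∀ v, ¬ H.IsIsolated v) {s : ℕ} (hs : s < G.vertexCoverNum) :
    s + Nat.card β ≤ Nat.card V := by
  obtain ⟨S, -, hS⟩ := Set.exists_subset_card_eq (s := (Set.univ : Set V))
    (n := min s (Nat.card V)) ((min_le_right _ _).trans_eq (Set.ncard_univ V).symm)
  have hlt : S.encard < G.vertexCoverNum := by
    rw [← S.toFinite.cast_ncard_eq, hS]
    exact (Nat.cast_le.2 (min_le_left _ _)).trans_lt hs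
  have hcard := h.card_le_ncard_compl hH hlt
  rw [Set.ncard_compl, hS] at hcard
  have := Nat.card_pos (α := β)
  omega

end Arrows

section CycleGraphMatchingGraph

theorem not_isIsolated_cycleGraph {n : ℕ} (hn : 2 ≤ n) (v : Fin n) :
    ¬ (cycleGraph n).IsIsolated v := by
  obtain ⟨n, rfl⟩ := Nat.exists_eq_add_of_le' hn
  exact exists_adj_iff_not_isIsolated.1 ⟨v + 1, cycleGraph_adj.2 (Or.inr (by simp))⟩

theorem le_two_mul_ncard_of_isVertexCover_cycleGraph {n : ℕ} (hn : 2 ≤ n) {s : Set (Fin n)}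
    (hs : (cycleGraph n).IsVertexCover s) : n ≤ 2 * s.ncard := by
  obtain ⟨n, rfl⟩ := Nat.exists_eq_add_of_le' hn
  have hcover : s ∪ (· - 1) '' s = Set.univ := by
    refine Set.eq_univ_of_forall fun v ↦ ?_
    rcases hs (cycleGraph_adj.2 (Or.inr (add_sub_cancel_left v 1))) with hv | hv
    · exact Or.inl hv
    · exact Or.inr ⟨v + 1, hv, add_sub_cancel_right v 1⟩
  calc n + 2 = (s ∪ (· - 1) '' s).ncard := by rw [hcover, Set.ncard_univ, Nat.card_fin]
    _ ≤ s.ncard + ((· - 1) '' s).ncard := Set.ncard_union_le _ _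
    _ ≤ s.ncard + s.ncard := Nat.add_le_add_left Set.ncard_image_le _
    _ = 2 * s.ncard := (two_mul _).symm

theorem not_isIsolated_matchingGraph {m : ℕ} (v : Fin m × Fin 2) :
    ¬ (matchingGraph m).IsIsolated v :=
  exists_adj_iff_not_isIsolated.1 ⟨(v.1, v.2 + 1), rfl, by simp⟩

theorem le_ncard_of_isVertexCover_matchingGraph {m : ℕ} {s : Set (Fin m × Fin 2)}
    (hs : (matchingGraph m).IsVertexCover s) : m ≤ s.ncard := by
  have hcover : Prod.fst '' s = Set.univ := by
    refine Set.eq_univ_of_forall fun i ↦ ?_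
    have hadj : (matchingGraph m).Adj (i, 0) (i, 1) := ⟨rfl, Fin.zero_ne_one⟩
    rcases hs hadj with hi | hi
    exacts [⟨_, hi, rfl⟩, ⟨_, hi, rfl⟩]
  calc m = (Prod.fst '' s).ncard := by rw [hcover, Set.ncard_univ, Nat.card_fin]
    _ ≤ s.ncard := Set.ncard_image_le

theorem natCast_lt_vertexCoverNum {V : Type*} [Finite V] {G : SimpleGraph V} {n : ℕ}
    (h : ∀ s : Set V, G.IsVertexCover s → n < s.ncard) : n < G.vertexCoverNum := by
  obtain ⟨s, hs, hcard⟩ := G.vertexCoverNum_exists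
  rw [← hs, ← s.toFinite.cast_ncard_eq]
  exact_mod_cast h s hcard

end CycleGraphMatchingGraph

section TutteBerge

variable {V V' W : Type*} {G : SimpleGraph V}

theorem ncard_oddComponents_congr {G' : SimpleGraph V'} (φ : G ≃g G') :
    G.oddComponents.ncard = G'.oddComponents.ncard := by
  rw [← Nat.card_coe_set_eq, ← Nat.card_coe_set_eq]
  refine Nat.card_congr (φ.connectedComponentEquiv.subtypeEquiv fun c ↦ ?_)
  rw [Set.mem_ofPred, Set.mem_ofPred, ← Nat.card_coe_set_eq, ← Nat.card_coe_set_eq,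
    Nat.card_congr (ConnectedComponent.isoEquivSupp φ c)]

theorem ncard_oddComponents_le_one_of_isUniversal {v : V} (hv : G.IsUniversal v) :
    G.oddComponents.ncard ≤ 1 :=
  have := (Connected.of_isUniversal hv).preconnected.subsingleton_connectedComponent
  Set.ncard_le_one_of_subsingleton _

/-- Deleting vertices inside the subgraph `⊤` is inducing on the complement. -/
def topDeleteVertsCoeIso (G : SimpleGraph V) (u : Set V) :
    ((⊤ : G.Subgraph).deleteVerts u).coe ≃g G.induce uᶜ where
  toEquiv := Equiv.subtypeEquivRight fun v ↦ by simp
  map_rel_iff' {x y} := by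
    have hx := x.2.2
    have hy := y.2.2
    simp [hx, hy]

theorem exists_isPerfectMatching_iff_ncard_oddComponents_induce_le [Finite V] :
    (∃ M : G.Subgraph, M.IsPerfectMatching) ↔
      ∀ u : Set V, (G.induce uᶜ).oddComponents.ncard ≤ u.ncard := by
  simp only [tutte, IsTutteViolator, not_lt, ncard_oddComponents_congr (topDeleteVertsCoeIso G _)]

/-- The join of `G` with the complete graph on `W`: every vertex in `W` is joined to all other
vertices. -/
def joinComplete (G : SimpleGraph V) (W : Type*) : SimpleGraph (V ⊕ W) :=
  (Gᶜ ⊕g (⊥ : SimpleGraph W))ᶜ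

theorem joinComplete_adj_inl {v v' : V} :
    (joinComplete G W).Adj (.inl v) (.inl v') ↔ G.Adj v v' := by
  simp only [joinComplete, compl_adj, sum_adj_inl, ne_eq, Sum.inl.injEq]
  refine ⟨fun h ↦ ?_, fun h ↦ ⟨h.ne, fun hG ↦ hG.2 h⟩⟩
  by_contra hG
  exact h.2 ⟨h.1, hG⟩

theorem isUniversal_joinComplete_inr (w : W) : (joinComplete G W).IsUniversal (.inr w) := by
  rintro (v | w') h
  · simp [joinComplete]
  · simpa [joinComplete] using h

/-- Deleting from the join a set containing all of `W` leaves an induced subgraph of `G`. -/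
noncomputable def joinCompleteInduceIso (G : SimpleGraph V) {u : Set (V ⊕ W)}
    (hu : Set.range Sum.inr ⊆ u) :
    G.induce (Sum.inl ⁻¹' u)ᶜ ≃g (joinComplete G W).induce uᶜ where
  toEquiv := Equiv.ofBijective (fun v ↦ ⟨.inl v, v.2⟩)
    ⟨fun v v' h ↦ Subtype.ext (Sum.inl_injective (congrArg Subtype.val h)), by
      rintro ⟨v | w, hv⟩
      exacts [⟨⟨v, hv⟩, rfl⟩, absurd (hu ⟨w, rfl⟩) hv]⟩
  map_rel_iff' := joinComplete_adj_inl

theorem ncard_eq_ncard_preimage_inl_add_card [Finite V] [Finite W] {u : Set (V ⊕ W)}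
    (hu : Set.range Sum.inr ⊆ u) : u.ncard = (Sum.inl ⁻¹' u : Set V).ncard + Nat.card W := by
  have hinr : (Sum.inr ⁻¹' u : Set W) = Set.univ := Set.eq_univ_of_forall fun w ↦ hu ⟨w, rfl⟩
  have hdisj : Disjoint (Sum.inl '' (Sum.inl ⁻¹' u)) (Sum.inr '' (Sum.inr ⁻¹' u)) :=
    Set.isCompl_range_inl_range_inr.disjoint.mono (Set.image_subset_range _ _)
      (Set.image_subset_range _ _)
  conv_lhs => rw [← Set.image_preimage_inl_union_image_preimage_inr u]
  rw [Set.ncard_union_eq hdisj, Set.ncard_image_of_injective _ Sum.inl_injective,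
    Set.ncard_image_of_injective _ Sum.inr_injective, hinr, Set.ncard_univ]

theorem exists_isMatching_of_isPerfectMatching_joinComplete [Finite V] [Finite W]
    {M : (joinComplete G W).Subgraph} (hM : M.IsPerfectMatching) :
    ∃ M' : G.Subgraph, M'.IsMatching ∧ Nat.card V ≤ M'.verts.ncard + Nat.card W := by
  let M' : G.Subgraph :=
    { verts := {v | ∃ w, M.Adj (.inl v) (.inl w)}
      Adj v w := M.Adj (.inl v) (.inl w)
      adj_sub h := joinComplete_adj_inl.1 (M.adj_sub h)
      edge_vert h := ⟨_, h⟩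
      symm := ⟨fun _ _ h ↦ M.adj_symm h⟩ }
  refine ⟨M', fun v ⟨w, hw⟩ ↦ ⟨w, hw, fun w' hw' ↦
    Sum.inl_injective (hM.1.eq_of_adj_left hw' hw)⟩, ?_⟩
  have hpartner (v : ↥M'.vertsᶜ) : ∃ w : W, M.Adj (.inl v) (.inr w) := by
    obtain ⟨x | w, hx, -⟩ := hM.1 (hM.2 (.inl v))
    exacts [absurd ⟨x, hx⟩ v.2, ⟨w, hx⟩]
  choose partner hadj using hpartner
  have hinj : Injective partner := fun v v' h ↦ Subtype.ext <| Sum.inl_injective <|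
    hM.1.eq_of_adj_right (hadj v) (h ▸ hadj v')
  have := Nat.card_le_card_of_injective partner hinj
  rw [Nat.card_coe_set_eq] at this
  rw [← M'.verts.ncard_add_ncard_compl]
  exact Nat.add_le_add_left this _

-- Tutte's theorem for the join of `G` with `K_d`: a perfect matching of the join leaves at most
-- `d` vertices of `G` unmatched within `G`.
theorem exists_isMatching_card_le_of_even [Finite V] {d : ℕ} (heven : Even (Nat.card V + d))
    (h : ∀ u : Set V, (G.induce uᶜ).oddComponents.ncard ≤ u.ncard + d) :
    ∃ M : G.Subgraph, M.IsMatching ∧ Nat.card V ≤ M.verts.ncard + d := by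
  suffices hT : ∀ u : Set (V ⊕ Fin d),
      ((joinComplete G (Fin d)).induce uᶜ).oddComponents.ncard ≤ u.ncard by
    obtain ⟨M, hM⟩ := exists_isPerfectMatching_iff_ncard_oddComponents_induce_le.2 hT
    simpa only [Nat.card_fin] using exists_isMatching_of_isPerfectMatching_joinComplete hM
  intro u
  by_cases hu : Set.range Sum.inr ⊆ u
  · rw [← ncard_oddComponents_congr (joinCompleteInduceIso G hu),
      ncard_eq_ncard_preimage_inl_add_card hu, Nat.card_fin]
    exact h _
  obtain ⟨_, ⟨w, rfl⟩, hw⟩ := Set.not_subset.1 hu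
  have hle : ((joinComplete G (Fin d)).induce uᶜ).oddComponents.ncard ≤ 1 :=
    ncard_oddComponents_le_one_of_isUniversal (v := ⟨.inr w, hw⟩) fun x hx ↦
      isUniversal_joinComplete_inr w fun hwx ↦ hx (Subtype.ext hwx)
  rcases u.eq_empty_or_nonempty with rfl | hne
  · have hcard : Nat.card ↥(∅ : Set (V ⊕ Fin d))ᶜ = Nat.card V + d := by
      rw [Nat.card_coe_set_eq, Set.compl_empty, Set.ncard_univ, Nat.card_sum, Nat.card_fin]
    have heven' : Even ((joinComplete G (Fin d)).induce ∅ᶜ).oddComponents.ncard := by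
      rwa [← Nat.not_odd_iff_even, odd_ncard_oddComponents, hcard, Nat.not_odd_iff_even]
    rw [Set.ncard_empty]
    grind
  · exact hle.trans ((Set.ncard_pos u.toFinite).2 hne)

-- The Tutte–Berge bound. When `|V| + d` is odd, parity improves the hypothesis to `d - 1`.
theorem exists_isMatching_card_le [Finite V] {d : ℕ}
    (h : ∀ u : Set V, (G.induce uᶜ).oddComponents.ncard ≤ u.ncard + d) :
    ∃ M : G.Subgraph, M.IsMatching ∧ Nat.card V ≤ M.verts.ncard + d := by
  rcases Nat.even_or_odd (Nat.card V + d) with heven | hodd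
  · exact exists_isMatching_card_le_of_even heven h
  have hne (u : Set V) : (G.induce uᶜ).oddComponents.ncard ≠ u.ncard + d := fun heq ↦ by
    have hparity := odd_ncard_oddComponents (G := G.induce uᶜ)
    rw [Nat.card_coe_set_eq, heq] at hparity
    have := u.ncard_add_ncard_compl
    grind
  have hlt (u : Set V) := (h u).lt_of_ne (hne u)
  obtain ⟨e, rfl⟩ : ∃ e, d = e + 1 :=
    Nat.exists_eq_succ_of_ne_zero fun hd ↦ by simpa [hd] using hlt ∅
  obtain ⟨M, hM, hcard⟩ := exists_isMatching_card_le_of_even (d := e) (by grind)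
    fun u ↦ Nat.lt_succ_iff.1 (hlt u)
  exact ⟨M, hM, by omega⟩

theorem ncard_verts_le_two_mul_ncard_edgeSet_of_isMatching {M : G.Subgraph} (hM : M.IsMatching)
    (hfin : M.edgeSet.Finite) : M.verts.ncard ≤ 2 * M.edgeSet.ncard := by
  have hpair (e : Sym2 V) : (e : Set V).ncard ≤ 2 := e.ind fun a b ↦ by
    simpa only [Sym2.coe_mk, Set.ncard_singleton] using Set.ncard_insert_le a {b}
  calc M.verts.ncard = (⋃ e ∈ hfin.toFinset, (e : Set V)).ncard := by
        simp only [hM.verts_eq_biUnion_edgeSet, hfin.mem_toFinset]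
    _ ≤ ∑ e ∈ hfin.toFinset, (e : Set V).ncard := Finset.set_ncard_biUnion_le _ _
    _ ≤ hfin.toFinset.card * 2 := Finset.sum_le_card_nsmul _ _ _ fun e _ ↦ hpair e
    _ = 2 * M.edgeSet.ncard := by rw [mul_comm, Set.ncard_eq_toFinset_card _ hfin]

theorem eq_of_mem_edgeSet_of_isMatching {M : G.Subgraph} (hM : M.IsMatching) {e e' : Sym2 V}
    (he : e ∈ M.edgeSet) (he' : e' ∈ M.edgeSet) {v : V} (hv : v ∈ e) (hv' : v ∈ e') : e = e' := by
  obtain ⟨w, rfl⟩ := hv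
  obtain ⟨w', rfl⟩ := hv'
  rw [hM.eq_of_adj_left (v := w) (w := w') he he']

theorem matchingGraph_isContained_of_isMatching [Finite V] {M : G.Subgraph} (hM : M.IsMatching)
    {m : ℕ} (hm : m ≤ M.edgeSet.ncard) : matchingGraph m ⊑ G := by
  have hends (e : M.edgeSet) :
      ∃ x : Fin 2 → V, (∀ i, x i ∈ e.1) ∧ ∀ i j, i ≠ j → M.Adj (x i) (x j) := by
    obtain ⟨⟨a, b⟩, hab⟩ := e
    refine ⟨![a, b], Fin.forall_fin_two.2 ⟨Sym2.mem_mk_left _ _, Sym2.mem_mk_right _ _⟩, ?_⟩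
    simpa [Fin.forall_fin_two] using ⟨hab, M.adj_symm hab⟩
  choose ends hmem hadj using hends
  obtain ⟨edge, hedge, hmem_edge⟩ := exists_injective_fin_of_le_ncard hm
  let x (i : Fin m) : Fin 2 → V := ends ⟨edge i, hmem_edge i⟩
  refine ⟨⟨⟨fun p ↦ x p.1 p.2, ?_⟩, ?_⟩⟩
  · rintro ⟨i, a⟩ ⟨_, b⟩ ⟨rfl, hab⟩
    exact M.adj_sub (hadj _ a b hab)
  · rintro ⟨i, a⟩ ⟨j, b⟩ (h : x i a = x j b)
    have hi : x i a ∈ edge i := hmem ⟨edge i, hmem_edge i⟩ a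
    have hj : x j b ∈ edge j := hmem ⟨edge j, hmem_edge j⟩ b
    rw [← h] at hj
    obtain rfl : i = j :=
      hedge (eq_of_mem_edgeSet_of_isMatching hM (hmem_edge i) (hmem_edge j) hi hj)
    by_contra hne
    exact (hadj _ a b fun hab ↦ hne (hab ▸ rfl)).ne h

end TutteBerge

section Cycle

variable {V ι : Type*} {R : SimpleGraph V}

theorem cycleGraph_isContained_of_forall_adj_add_one {n : ℕ} {f : Fin (n + 1) → V}
    (hf : Injective f) (hadj : ∀ i, R.Adj (f i) (f (i + 1))) : cycleGraph (n + 1) ⊑ R := by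
  refine ⟨⟨⟨f, fun {i j} hij ↦ ?_⟩, hf⟩⟩
  rw [cycleGraph_eq_circulantGraph, circulantGraph_adj] at hij
  rcases hij.2 with h | h <;> obtain rfl := sub_eq_iff_eq_add'.1 (Set.mem_singleton_iff.1 h)
  · exact (hadj j).symm
  · exact hadj i

-- The cycle visits the indices in the zigzag order `0, t + 1, 1, t + 2, …` with
-- `t = (k - 1) / 2`: indices of consecutive vertices differ by at least `t`, and the smaller one
-- is at most `t`.
theorem cycleGraph_isContained_of_forall_adj_of_le {k : ℕ} (hk : 3 ≤ k) {v : Fin k → V}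
    (hv : Injective v)
    (hadj : ∀ i j : Fin k, (i : ℕ) ≤ (k - 1) / 2 → (i : ℕ) + (k - 1) / 2 ≤ j → R.Adj (v i) (v j)) :
    cycleGraph k ⊑ R := by
  obtain ⟨n, rfl⟩ : ∃ n, k = n + 1 := ⟨k - 1, by omega⟩
  rw [Nat.add_sub_cancel] at hadj
  let zigzag (p : Fin (n + 1)) : Fin (n + 1) :=
    ⟨if (p : ℕ) % 2 = 0 then p / 2 else p / 2 + (n / 2 + 1), by split_ifs <;> omega⟩
  have heven (p : Fin (n + 1)) (hp : (p : ℕ) % 2 = 0) : (zigzag p : ℕ) = p / 2 := if_pos hp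
  have hodd (p : Fin (n + 1)) (hp : (p : ℕ) % 2 ≠ 0) : (zigzag p : ℕ) = p / 2 + (n / 2 + 1) :=
    if_neg hp
  have hinj : Injective zigzag := fun p q h ↦ by grind
  refine cycleGraph_isContained_of_forall_adj_add_one (hv.comp hinj) fun p ↦ ?_
  have hsucc : ((p + 1 : Fin (n + 1)) : ℕ) = if p = Fin.last n then 0 else (p : ℕ) + 1 :=
    Fin.val_add_one p
  by_cases hp : (p : ℕ) % 2 = 0 ∧ p ≠ Fin.last n
  · refine hadj _ _ ?_ ?_ <;> grind [heven p hp.1]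
  · refine (hadj _ _ ?_ ?_).symm <;> grind

-- Listing the vertices by colour class, vertices whose positions differ by at least the size of
-- every class have different colours.
theorem exists_injective_forall_ne_of_ncard_fiber_le [Finite V] [LinearOrder ι] {c : V → ι}
    {t : ℕ} (hc : ∀ i, (c ⁻¹' {i}).ncard ≤ t) {k : ℕ} (hk : k ≤ Nat.card V) :
    ∃ v : Fin k → V, Injective v ∧ ∀ i j : Fin k, (i : ℕ) + t ≤ j → c (v i) ≠ c (v j) := by
  let e := (Finite.equivFin V).symm
  let v : Fin k → V := e ∘ Tuple.sort (c ∘ e) ∘ Fin.castLE hk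
  have hmono : Monotone (c ∘ v) :=
    (Tuple.monotone_sort (c ∘ e)).comp (Fin.strictMono_castLE hk).monotone
  have hv : Injective v :=
    e.injective.comp ((Equiv.injective _).comp (Fin.castLE_injective hk))
  refine ⟨v, hv, fun i j hij heq ↦ ?_⟩
  have hsub : v '' Finset.Icc i j ⊆ c ⁻¹' {c (v i)} := by
    rintro _ ⟨l, hl, rfl⟩
    obtain ⟨hil, hlj⟩ := Finset.mem_Icc.1 hl
    exact le_antisymm ((hmono hlj).trans_eq heq.symm) (hmono hil)
  have hcard := (Set.ncard_le_ncard hsub).trans (hc _)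
  rw [Set.ncard_image_of_injective _ hv, Set.ncard_coe_finset, Fin.card_Icc] at hcard
  omega

theorem cycleGraph_isContained_of_ncard_fiber_le [Finite V] {c : V → ι}
    (hR : ∀ x y, c x ≠ c y → R.Adj x y) {k : ℕ} (hk : 3 ≤ k) (hcard : k ≤ Nat.card V)
    (hc : ∀ i, (c ⁻¹' {i}).ncard ≤ (k - 1) / 2) : cycleGraph k ⊑ R := by
  obtain ⟨_, -⟩ := exists_wellFoundedLT ι
  obtain ⟨v, hv, hne⟩ := exists_injective_forall_ne_of_ncard_fiber_le hc hcard
  exact cycleGraph_isContained_of_forall_adj_of_le hk hv fun i j _ hij ↦ hR _ _ (hne i j hij)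

-- Interleave vertices of distinct other colours with vertices of the large class.
theorem cycleGraph_isContained_of_lt_ncard_fiber [Finite V] {c : V → ι} (hc : Surjective c)
    (hR : ∀ x y, c x ≠ c y → R.Adj x y) {k : ℕ} (hk : 3 ≤ k) (hι : (k - 1) / 2 + 2 ≤ Nat.card ι)
    {i₀ : ι} (hi₀ : (k - 1) / 2 < (c ⁻¹' {i₀}).ncard) : cycleGraph k ⊑ R := by
  obtain ⟨t, s, ht, hst, rfl⟩ : ∃ t s, (k - 1) / 2 = t ∧ s ≤ t + 1 ∧ k = t + 1 + s :=
    ⟨(k - 1) / 2, k / 2, rfl, by omega, by omega⟩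
  have := Finite.of_surjective c hc
  have hother : t + 1 ≤ ({i₀}ᶜ : Set ι).ncard := by
    rw [Set.ncard_compl, Set.ncard_singleton]
    omega
  obtain ⟨colour, hcolour, hne⟩ := exists_injective_fin_of_le_ncard hother
  obtain ⟨ys, hys, hyc⟩ := exists_injective_fin_of_le_ncard (hst.trans (ht ▸ hi₀))
  let xs : Fin (t + 1) → V := surjInv hc ∘ colour
  have hxc (i) : c (xs i) = colour i := surjInv_eq hc _
  have hxy (i j) : c (xs i) ≠ c (ys j) := by
    rw [hxc, hyc j]
    exact hne i
  refine cycleGraph_isContained_of_forall_adj_of_le hk (v := Fin.append xs ys)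
    (Fin.append_injective_iff.2 ⟨(injective_surjInv hc).comp hcolour, hys,
      fun i j h ↦ hxy i j (congrArg c h)⟩) fun i j hi hij ↦ hR _ _ ?_
  rw [ht] at hi hij
  obtain ⟨i, rfl⟩ : ∃ i', i = Fin.castAdd s i' := ⟨⟨i, by omega⟩, rfl⟩
  rw [Fin.append_left]
  refine j.addCases (fun j hij ↦ ?_) (fun j _ ↦ ?_) hij
  · rw [Fin.append_left, hxc, hxc]
    refine hcolour.ne fun h ↦ ?_
    rw [h] at hij
    omega
  · rw [Fin.append_right]
    exact hxy i j

theorem cycleGraph_isContained_of_surjective [Finite V] {c : V → ι} (hc : Surjective c)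
    (hR : ∀ x y, c x ≠ c y → R.Adj x y) {k : ℕ} (hk : 3 ≤ k) (hcard : k ≤ Nat.card V)
    (hι : (k - 1) / 2 + 2 ≤ Nat.card ι) : cycleGraph k ⊑ R := by
  by_cases hlarge : ∃ i, (k - 1) / 2 < (c ⁻¹' {i}).ncard
  · obtain ⟨i₀, hi₀⟩ := hlarge
    exact cycleGraph_isContained_of_lt_ncard_fiber hc hR hk hι hi₀
  · push Not at hlarge
    exact cycleGraph_isContained_of_ncard_fiber_le hR hk hcard hlarge

end Cycle

section Ramsey

variable {V : Type*}

theorem exists_lt_card_connectedComponent_of_not_isContained [Finite V] {G : SimpleGraph V} {m : ℕ}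
    (hG : ¬ matchingGraph m ⊑ G) :
    ∃ u : Set V, u.ncard + Nat.card V + 1 < Nat.card (G.induce uᶜ).ConnectedComponent + 2 * m := by
  by_contra! h
  have hodd (u : Set V) :
      (G.induce uᶜ).oddComponents.ncard ≤ u.ncard + (Nat.card V + 1 - 2 * m) := by
    have := Set.ncard_le_card (G.induce uᶜ).oddComponents
    have := h u
    omega
  obtain ⟨M, hM, hcard⟩ := exists_isMatching_card_le hodd
  have hedges := ncard_verts_le_two_mul_ncard_edgeSet_of_isMatching hM M.edgeSet.toFinite
  have hempty := h ∅
  rw [Set.ncard_empty] at hempty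
  exact hG (matchingGraph_isContained_of_isMatching hM (by omega))

theorem arrows_cycleGraph_matchingGraph [Finite V] {k m : ℕ} (hk : 3 ≤ k)
    (hV : 2 * m + (k - 1) / 2 ≤ Nat.card V) (hV' : k + m ≤ Nat.card V + 1) :
    Arrows V (cycleGraph k) (matchingGraph m) := fun C ↦ by
  refine or_iff_not_imp_right.2 fun hblue ↦ ?_
  obtain ⟨u, hu⟩ := exists_lt_card_connectedComponent_of_not_isContained hblue
  have hsurj : Surjective (Cᶜ.induce uᶜ).connectedComponentMk := Quot.mk_surjective
  have hcomponents : Nat.card (Cᶜ.induce uᶜ).ConnectedComponent ≤ Nat.card ↥uᶜ :=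
    Nat.card_le_card_of_surjective _ hsurj
  have hsum : u.ncard + Nat.card ↥uᶜ = Nat.card V := u.ncard_add_ncard_compl
  have hred (x y : ↥uᶜ) (hxy : (Cᶜ.induce uᶜ).connectedComponentMk x ≠
      (Cᶜ.induce uᶜ).connectedComponentMk y) : (C.induce uᶜ).Adj x y := by
    by_contra hC
    refine hxy (ConnectedComponent.sound (Adj.reachable ?_))
    exact ⟨fun h ↦ hxy (congrArg _ (Subtype.ext h)), hC⟩
  have hcycle : cycleGraph k ⊑ C.induce uᶜ :=
    cycleGraph_isContained_of_surjective hsurj hred hk (by omega) (by omega)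
  exact hcycle.trans ⟨Copy.induce C uᶜ⟩

theorem Arrows.max_le_card [Finite V] {k m : ℕ} (hk : 3 ≤ k) (hm : 1 ≤ m)
    (h : Arrows V (cycleGraph k) (matchingGraph m)) :
    max (2 * m + (k - 1) / 2) (k + m - 1) ≤ Nat.card V := by
  have : NeZero k := ⟨by omega⟩
  have : NeZero m := ⟨by omega⟩
  have hcycle := h.add_card_le not_isIsolated_matchingGraph (s := (k - 1) / 2) <|
    natCast_lt_vertexCoverNum fun s hs ↦ by
      have := le_two_mul_ncard_of_isVertexCover_cycleGraph (by omega) hs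
      omega
  have hmatching := h.symm.add_card_le (not_isIsolated_cycleGraph (by omega)) (s := m - 1) <|
    natCast_lt_vertexCoverNum fun s hs ↦ by
      have := le_ncard_of_isVertexCover_matchingGraph hs
      omega
  rw [Nat.card_prod, Nat.card_fin, Nat.card_fin] at hcycle
  rw [Nat.card_fin] at hmatching
  omega

end Ramsey

theorem stmt_8_general (k m : ℕ) (hk : 3 ≤ k) (hm : 1 ≤ m) :
    ramseyNumber (SimpleGraph.cycleGraph k) (matchingGraph m) =
      max (2 * m + (k - 1) / 2) (k + m - 1) := by
  rw [ramseyNumber_eq_sInf_arrows]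
  have harrows : Arrows (Fin (max (2 * m + (k - 1) / 2) (k + m - 1)))
      (cycleGraph k) (matchingGraph m) :=
    arrows_cycleGraph_matchingGraph hk (by rw [Nat.card_fin]; omega) (by rw [Nat.card_fin]; omega)
  refine le_antisymm (Nat.sInf_le harrows) (le_csInf ⟨_, harrows⟩ fun N hN ↦ ?_)
  simpa only [Nat.card_fin] using Arrows.max_le_card hk hm hN

theorem stmt_8 (k m : ℕ) (hk : 3 ≤ k) (hm : k ≤ m) :
    ramseyNumber (SimpleGraph.cycleGraph k) (matchingGraph m) = 2 * m + (k - 1) / 2 := by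
  rw [stmt_8_general k m hk (by omega)]
  omega
end

section
/- For every graph H with no isolated vertices, R(K₃, H) ≤ 2·e(H) + 1. -/
/-!
Consider a minimal counterexample: a triangle-free `C` on `N` vertices and a graph `H` on `n ≤ N`
vertices, with degree sum less than `N`, that does not embed into the complement of `C`, while
every proper induced subgraph of `H` embeds wherever there is enough room. Let `δ` be the minimum
degree of `H`, let `s` be the excess of its degree sum over `δ * n`, and let `K` be a largest
independent set of `C`. It is too small for `H`, by `t = n - |K| > 0` vertices. Neighbourhoods in
`C` are independent, so the degrees of `C` are at most `|K|`; embedding all of `H` but one vertex of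
degree `δ`, which then has no place left, gives `δ * t + s + 2 ≤ n`.

Once `t` vertices of `H` have been placed outside `K` with their other neighbours in `K`, the rest
of `H` fits into `K`. If a further vertex cannot be placed, the candidates for it and for one of its
neighbours span a large complete bipartite subgraph of `C`, with sides `X` and `Y`. No vertex of `C`
is joined to both sides, so one side, say `X`, has many non-neighbours: put into `X` a set of
vertices whose deletion leaves few edges of `H`, and the rest of `H` into the non-neighbours of
`X`. By this contradiction `H` first has two adjacent vertices of degree `δ`, and then, removing
such a pair, it has more than `3 * ((δ - 1) * t + s + 3)` vertices. That is room enough to place `t`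
vertices of degree `δ` outside `K`: one at a time if `δ ≥ 3`, all at once by minimality if `δ = 2`.
-/

open Finset SimpleGraph

section InteredgeCounts

variable {V : Type*} {H : SimpleGraph V} [DecidableRel H.Adj]

lemma card_interedges_comm (S T : Finset V) : #(H.interedges S T) = #(H.interedges T S) :=
  have := H.symm
  Rel.card_interedges_comm S T

lemma card_interedges_self_mono {S T : Finset V} (h : S ⊆ T) :
    #(H.interedges S S) ≤ #(H.interedges T T) :=
  card_le_card (H.interedges_mono h h)

lemma card_interedges_union_left [DecidableEq V] {S S' : Finset V} (h : Disjoint S S')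
    (T : Finset V) : #(H.interedges (S ∪ S') T) = #(H.interedges S T) + #(H.interedges S' T) := by
  rw [← card_union_of_disjoint (H.interedges_disjoint_left h T)]
  simp only [interedges_def, union_product, filter_union]

lemma card_interedges_union_right [DecidableEq V] (S : Finset V) {T T' : Finset V}
    (h : Disjoint T T') :
    #(H.interedges S (T ∪ T')) = #(H.interedges S T) + #(H.interedges S T') := by
  simp only [card_interedges_comm S, card_interedges_union_left h]

lemma card_interedges_comap_coe (T : Finset V) :
    #((H.comap ((↑) : T → V)).interedges univ univ) = #(H.interedges T T) := by
  rw [← card_map ((Function.Embedding.subtype _).prodMap (Function.Embedding.subtype _))]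
  congr 1
  ext ⟨a, b⟩
  simp [mk_mem_interedges_iff, and_assoc, and_comm (a := H.Adj a b)]

variable [Fintype V]

lemma card_interedges_univ_right (S : Finset V) :
    #(H.interedges S univ) = ∑ v ∈ S, H.degree v := by
  simp only [interedges_def, card_filter, sum_product, ← card_neighborFinset_eq_degree,
    neighborFinset_eq_filter]

lemma card_interedges_univ_univ : #(H.interedges univ univ) = 2 * #H.edgeFinset := by
  rw [card_interedges_univ_right, sum_degrees_eq_twice_card_edges]

omit [Fintype V] in
lemma even_card_interedges_self (T : Finset V) : Even #(H.interedges T T) := by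
  classical
  rw [← card_interedges_comap_coe, card_interedges_univ_univ]
  exact even_two_mul _

variable [DecidableEq V]

lemma card_interedges_eq_sum_card_neighborFinset_inter (S T : Finset V) :
    #(H.interedges S T) = ∑ v ∈ S, #(H.neighborFinset v ∩ T) := by
  simp only [interedges_def, card_filter, sum_product, neighborFinset_eq_filter, filter_inter,
    univ_inter]

lemma card_interedges_erase_add {T : Finset V} {v : V} (hv : v ∈ T) :
    #(H.interedges (T.erase v) (T.erase v)) + 2 * #(H.neighborFinset v ∩ T) =
      #(H.interedges T T) := by
  have hdisj : Disjoint {v} (T.erase v) := disjoint_singleton_left.2 (notMem_erase v T)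
  have hself : #(H.interedges {v} {v}) = 0 := by
    simp [card_interedges_eq_sum_card_neighborFinset_inter]
  have hnbr : #(H.interedges {v} (T.erase v)) = #(H.neighborFinset v ∩ T) := by
    rw [card_interedges_eq_sum_card_neighborFinset_inter, sum_singleton, inter_erase,
      erase_eq_of_notMem (by simp)]
  conv_rhs => rw [← insert_erase hv, insert_eq, card_interedges_union_left hdisj,
    card_interedges_union_right _ hdisj, card_interedges_union_right _ hdisj, hself,
    card_interedges_comm (T.erase v) {v}, hnbr]
  ring

lemma card_interedges_univ_eq_add_compl {S : Finset V} (hS : ∀ a ∈ S, ∀ b ∉ S, ¬ H.Adj a b) :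
    #(H.interedges univ univ) = #(H.interedges S S) + #(H.interedges Sᶜ Sᶜ) := by
  have hcross : #(H.interedges S Sᶜ) = 0 := by
    rw [card_eq_zero, eq_empty_iff_forall_notMem]
    rintro ⟨a, b⟩ hab
    obtain ⟨ha, hb, hab⟩ := H.mk_mem_interedges_iff.1 hab
    exact hS a ha b (mem_compl.1 hb) hab
  rw [← union_compl S, card_interedges_union_left disjoint_compl_right,
    card_interedges_union_right _ disjoint_compl_right,
    card_interedges_union_right _ disjoint_compl_right, card_interedges_comm Sᶜ S, hcross]
  ring

end InteredgeCounts

lemma exists_adj_notMem_of_connected {V : Type*} [Fintype V] {H : SimpleGraph V}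
    (hH : H.Connected) {S : Finset V} (hS : S.Nonempty) (hS' : S ≠ univ) :
    ∃ a ∈ S, ∃ b ∉ S, H.Adj a b := by
  obtain ⟨a, ha⟩ := hS
  obtain ⟨b, hb⟩ : ∃ b, b ∉ S := by simpa [eq_univ_iff_forall] using hS'
  obtain ⟨p⟩ := hH.preconnected a b
  obtain ⟨e, -, he, he'⟩ := p.exists_boundary_dart S ha hb
  exact ⟨e.fst, he, e.snd, he', e.adj⟩

section Excess

variable {V : Type*} [Fintype V]

/-- The amount by which the degree sum over `S` exceeds `δ(H) * |S|`. -/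
def excess (H : SimpleGraph V) [DecidableRel H.Adj] (S : Finset V) : ℕ :=
  ∑ v ∈ S, (H.degree v - H.minDegree)

variable {H : SimpleGraph V} [DecidableRel H.Adj]

lemma sum_degree_eq_minDegree_mul_add_excess (S : Finset V) :
    ∑ v ∈ S, H.degree v = H.minDegree * #S + excess H S := by
  rw [excess, mul_comm, ← smul_eq_mul, ← sum_const, ← sum_add_distrib]
  exact sum_congr rfl fun v _ => (Nat.add_sub_cancel' (H.minDegree_le_degree v)).symm

lemma excess_mono {S T : Finset V} (h : S ⊆ T) : excess H S ≤ excess H T :=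
  sum_le_sum_of_subset h

lemma card_interedges_univ_univ_eq_add_excess :
    #(H.interedges univ univ) = H.minDegree * Fintype.card V + excess H univ := by
  rw [card_interedges_univ_right, sum_degree_eq_minDegree_mul_add_excess, card_univ]

end Excess

section GreedyDeletion

variable {V : Type*} [Fintype V] [DecidableEq V]

/-- The maximum degree of the subgraph of `H` induced on `T`. -/
def maxDegreeOn (H : SimpleGraph V) [DecidableRel H.Adj] (T : Finset V) : ℕ :=
  T.sup fun v => #(H.neighborFinset v ∩ T)

/-- `W` arises by deleting `j + k` vertices one at a time, each of maximum degree in what is left.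
`D` is the maximum degree after the deletions, and each of the last `k` deleted vertices had degree
`D` when it was deleted, while each of the first `j` had degree larger than `D`. The structure
records what is used of this: two bounds on the edges left. -/
structure IsGreedyDeletion (H : SimpleGraph V) [DecidableRel H.Adj] (W : Finset V) (D j k : ℕ) :
    Prop where
  card_eq : #W = j + k
  maxDegreeOn_eq : maxDegreeOn H Wᶜ = D
  le_mul_card : #(H.interedges Wᶜ Wᶜ) + 2 * D * k + D * j ≤ D * Fintype.card V
  le_total : #(H.interedges Wᶜ Wᶜ) + 2 * D * (j + k) + 2 * j ≤ #(H.interedges univ univ)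

variable {H : SimpleGraph V} [DecidableRel H.Adj]

lemma card_neighborFinset_inter_le_maxDegreeOn {T : Finset V} {v : V} (hv : v ∈ T) :
    #(H.neighborFinset v ∩ T) ≤ maxDegreeOn H T :=
  le_sup (f := fun v => #(H.neighborFinset v ∩ T)) hv

lemma maxDegreeOn_mono {S T : Finset V} (h : S ⊆ T) : maxDegreeOn H S ≤ maxDegreeOn H T :=
  Finset.sup_le fun _ hv => (card_le_card (inter_subset_inter_left h)).trans
    (card_neighborFinset_inter_le_maxDegreeOn (h hv))

lemma card_interedges_self_le_maxDegreeOn_mul (T : Finset V) :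
    #(H.interedges T T) ≤ maxDegreeOn H T * #T := by
  rw [card_interedges_eq_sum_card_neighborFinset_inter, mul_comm, ← smul_eq_mul]
  exact sum_le_card_nsmul _ _ _ fun v hv => card_neighborFinset_inter_le_maxDegreeOn hv

lemma isGreedyDeletion_empty : IsGreedyDeletion H ∅ (maxDegreeOn H ∅ᶜ) 0 0 where
  card_eq := rfl
  maxDegreeOn_eq := rfl
  le_mul_card := by
    simpa only [mul_zero, add_zero, compl_empty, card_univ] using
      card_interedges_self_le_maxDegreeOn_mul (H := H) (∅ᶜ : Finset V)
  le_total := by simp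

lemma IsGreedyDeletion.exists_insert {W : Finset V} {D j k : ℕ} (h : IsGreedyDeletion H W D j k)
    (hW : Wᶜ.Nonempty) : ∃ v ∉ W, ∃ D' j' k', IsGreedyDeletion H (insert v W) D' j' k' := by
  obtain ⟨v, hvW, hv⟩ := exists_mem_eq_sup Wᶜ hW fun v => #(H.neighborFinset v ∩ Wᶜ)
  replace hv : #(H.neighborFinset v ∩ Wᶜ) = D := hv.symm.trans h.maxDegreeOn_eq
  have hedges := hv ▸ card_interedges_erase_add (H := H) hvW
  rw [← compl_insert] at hedges
  have hmul := h.le_mul_card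
  have htotal := h.le_total
  have hmono : maxDegreeOn H (insert v W)ᶜ ≤ D :=
    h.maxDegreeOn_eq ▸ maxDegreeOn_mono (compl_subset_compl.2 (subset_insert v W))
  rw [mem_compl] at hvW
  have hcard : #(insert v W) = j + k + 1 := by rw [card_insert_of_notMem hvW, h.card_eq]
  refine ⟨v, hvW, ?_⟩
  rcases hmono.lt_or_eq with hlt | heq
  · refine ⟨_, j + k + 1, 0, hcard, rfl, ?_, ?_⟩
    · have hsup := card_interedges_self_le_maxDegreeOn_mul (H := H) (insert v W)ᶜ
      have hcompl := card_add_card_compl (insert v W)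
      rw [← hcompl, hcard]
      linarith
    · have := Nat.mul_le_mul_right (j + k + 1) hlt
      linarith
  · exact ⟨D, j, k + 1, by rw [hcard, add_assoc], heq, by linarith, by linarith⟩

lemma exists_isGreedyDeletion (m : ℕ) (hm : m ≤ Fintype.card V) :
    ∃ W : Finset V, #W = m ∧ ∃ D j k, IsGreedyDeletion H W D j k := by
  induction m with
  | zero => exact ⟨∅, rfl, _, 0, 0, isGreedyDeletion_empty⟩
  | succ m ih =>
    obtain ⟨W, hW, D, j, k, h⟩ := ih (by omega)
    obtain ⟨v, hv, h'⟩ := h.exists_insert (by rw [← card_pos, card_compl]; omega)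
    exact ⟨insert v W, by rw [card_insert_of_notMem hv, hW], h'⟩

lemma exists_card_eq_two_mul_card_interedges_compl_add_le {m : ℕ} (hm : m ≤ Fintype.card V)
    (hm' : Fintype.card V ≤ 3 * m) (hH : 2 * Fintype.card V ≤ #(H.interedges univ univ)) :
    ∃ W : Finset V, #W = m ∧ 2 * #(H.interedges Wᶜ Wᶜ) + 2 * m ≤ #(H.interedges univ univ) := by
  obtain ⟨W, rfl, D, j, k, h⟩ := exists_isGreedyDeletion (H := H) m hm
  refine ⟨W, rfl, ?_⟩
  rcases le_or_gt D 1 with hD | hD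
  · have hsup := card_interedges_self_le_maxDegreeOn_mul (H := H) Wᶜ
    rw [h.maxDegreeOn_eq] at hsup
    have := hsup.trans (Nat.mul_le_mul_right _ hD)
    have := card_add_card_compl W
    omega
  · have hmul := h.le_mul_card
    have htotal := h.le_total
    rw [h.card_eq] at hm' ⊢
    have := Nat.mul_le_mul_left D hm'
    have := Nat.mul_le_mul_right k hD
    linarith

end GreedyDeletion

section Packing

variable {V β : Type*} {H : SimpleGraph V} {C : SimpleGraph β} {S T : Finset V} {g g' : V → β}

/-- `g` embeds `H[T]` into the complement of `C`. -/
structure IsPackingOn (H : SimpleGraph V) (C : SimpleGraph β) (T : Finset V) (g : V → β) :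
    Prop where
  injOn : Set.InjOn g T
  not_adj : ∀ a ∈ T, ∀ b ∈ T, H.Adj a b → ¬ C.Adj (g a) (g b)

/-- The vertices outside `B` joined to no vertex of `g(S)` in `C`: they can receive a further
vertex of `H` whose embedded neighbours all lie in `S`. -/
noncomputable def candidates [Fintype β] (C : SimpleGraph β) (B : Finset β) (S : Finset V)
    (g : V → β) : Finset β :=
  open scoped Classical in {y | y ∉ B ∧ ∀ u ∈ S, ¬ C.Adj (g u) y}

@[simp]
lemma mem_candidates [Fintype β] {B : Finset β} {y : β} :
    y ∈ candidates C B S g ↔ y ∉ B ∧ ∀ u ∈ S, ¬ C.Adj (g u) y := by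
  simp [candidates]

lemma card_le_card_candidates_add [Fintype β] {m : ℕ} [DecidableRel C.Adj]
    (hm : ∀ x, C.degree x ≤ m) (B : Finset β) (S : Finset V) (g : V → β) :
    Fintype.card β ≤ #(candidates C B S g) + #B + #S * m := by
  classical
  have hcover : univ ⊆ candidates C B S g ∪ B ∪ S.biUnion fun u => C.neighborFinset (g u) := by
    intro y _
    simp only [mem_union, mem_candidates, mem_biUnion, mem_neighborFinset]
    grind
  calc Fintype.card β
      ≤ #(candidates C B S g ∪ B) + #(S.biUnion fun u => C.neighborFinset (g u)) :=
        (card_le_card hcover).trans (card_union_le _ _)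
    _ ≤ _ := add_le_add (card_union_le _ _) (card_biUnion_le_card_mul _ _ _ fun u _ => hm (g u))

lemma exists_forall_mem_injOn [Nonempty β] {A : V → Finset β} (hA : ∀ a ∈ T, #T ≤ #(A a)) :
    ∃ g : V → β, (∀ a ∈ T, g a ∈ A a) ∧ Set.InjOn g T := by
  classical
  obtain ⟨f, hinj, hmem⟩ := (all_card_le_biUnion_card_iff_exists_injective fun a : T => A a).1 <| by
    intro S
    obtain rfl | ⟨a, ha⟩ := S.eq_empty_or_nonempty
    · simp
    calc #S ≤ #T := by simpa using card_le_univ S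
      _ ≤ #(A a) := hA a a.2
      _ ≤ #(S.biUnion fun a => A a) := card_le_card (subset_biUnion_of_mem (fun a : T => A a) ha)
  have hg := Subtype.val_injective.extend_apply f fun _ => Classical.arbitrary β
  refine ⟨Function.extend (↑) f fun _ => Classical.arbitrary β,
    fun a ha => hg ⟨a, ha⟩ ▸ hmem ⟨a, ha⟩, fun a ha b hb hab => ?_⟩
  exact congrArg Subtype.val (hinj ((hg ⟨a, ha⟩).symm.trans (hab.trans (hg ⟨b, hb⟩))))

lemma isPackingOn_of_isIndepSet {K : Set β} (hK : C.IsIndepSet K) (hg : ∀ a ∈ T, g a ∈ K)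
    (hinj : Set.InjOn g T) : IsPackingOn H C T g where
  injOn := hinj
  not_adj a ha b hb _ hab := hK (hg a ha) (hg b hb) hab.ne hab

lemma IsPackingOn.mono (h : IsPackingOn H C T g) (hST : S ⊆ T) : IsPackingOn H C S g where
  injOn := h.injOn.mono hST
  not_adj a ha b hb := h.not_adj a (hST ha) b (hST hb)

lemma IsPackingOn.congr (h : IsPackingOn H C T g) (hg : ∀ a ∈ T, g a = g' a) :
    IsPackingOn H C T g' where
  injOn := h.injOn.congr hg
  not_adj a ha b hb hab := hg a ha ▸ hg b hb ▸ h.not_adj a ha b hb hab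

variable [DecidableEq V]

lemma IsPackingOn.union (hS : IsPackingOn H C S g) (hT : IsPackingOn H C T g)
    (hne : ∀ a ∈ S, ∀ b ∈ T, b ∉ S → g a ≠ g b)
    (hadj : ∀ a ∈ S, ∀ b ∈ T, b ∉ S → H.Adj a b → ¬ C.Adj (g a) (g b)) :
    IsPackingOn H C (S ∪ T) g where
  injOn := by
    intro a ha b hb hab
    rw [mem_coe, mem_union] at ha hb
    have hT' := hT.injOn (x₁ := a) (x₂ := b)
    have hS' := hS.injOn (x₁ := a) (x₂ := b)
    grind
  not_adj a ha b hb hab hC := by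
    rw [mem_union] at ha hb
    have := hS.not_adj a
    have := hT.not_adj a
    have := hab.symm
    have := hC.symm
    grind

lemma IsPackingOn.union_ite (hS : IsPackingOn H C S g) (hT : IsPackingOn H C T g')
    (hne : ∀ a ∈ S, ∀ b ∈ T, b ∉ S → g a ≠ g' b)
    (hadj : ∀ a ∈ S, ∀ b ∈ T, b ∉ S → H.Adj a b → ¬ C.Adj (g a) (g' b)) :
    IsPackingOn H C (S ∪ T) fun a => if a ∈ S then g a else g' a := by
  rw [← union_sdiff_self_eq_union]
  refine (hS.congr ?_).union ((hT.mono sdiff_subset).congr ?_) ?_ ?_ <;> grind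

lemma IsPackingOn.insert_update (h : IsPackingOn H C T g) {v : V} (hv : v ∉ T) {y : β}
    (hne : ∀ a ∈ T, g a ≠ y) (hadj : ∀ a ∈ T, H.Adj v a → ¬ C.Adj (g a) y) :
    IsPackingOn H C (insert v T) (Function.update g v y) := by
  rw [← union_singleton]
  refine (h.congr fun a ha => ?_).union ⟨by simp, ?_⟩ ?_ ?_
  · rw [Function.update_of_ne (ne_of_mem_of_not_mem ha hv)]
  all_goals have := @SimpleGraph.Adj.symm V H; have := H.irrefl (v := v); grind

end Packing

/-- A triangle-free `C` with no copy of `H` in its complement, although `C` has as many vertices as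
the theorem asks for (the degree sum of `H[T]` is `#(H.interedges T T)`), whereas every proper
induced subgraph of `H` embeds into the complement of `C` inside any set that is large enough. -/
structure MinimalCounterexample {V β : Type*} [Fintype V] [Fintype β] (H : SimpleGraph V)
    [DecidableRel H.Adj] (C : SimpleGraph β) : Prop where
  cliqueFree : C.CliqueFree 3
  exists_isPackingOn : ∀ T ≠ univ, ∀ Y : Finset β, #T ≤ #Y → #(H.interedges T T) < #Y →
    ∃ g : V → β, (∀ a ∈ T, g a ∈ Y) ∧ IsPackingOn H C T g
  not_isPackingOn_univ : ∀ g, ¬ IsPackingOn H C univ g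
  card_le : Fintype.card V ≤ Fintype.card β
  interedges_lt : #(H.interedges univ univ) < Fintype.card β

/-- The number of vertices by which the largest independent set of `C` is too small to hold all of
`V`. -/
noncomputable def deficiency (V : Type*) [Fintype V] {β : Type*} (C : SimpleGraph β) : ℕ :=
  Fintype.card V - C.indepNum

namespace MinimalCounterexample

variable {V β : Type*} [Fintype V] [Fintype β] {H : SimpleGraph V} [DecidableRel H.Adj]
  {C : SimpleGraph β} (hc : MinimalCounterexample H C)

include hc

lemma not_adj_of_adj_adj {a b c : β} (hab : C.Adj a b) (hbc : C.Adj b c) : ¬ C.Adj a c := by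
  classical
  exact fun hac => hc.cliqueFree {a, b, c} (is3Clique_triple_iff.2 ⟨hab, hac, hbc⟩)

lemma isIndepSet_of_forall_adj {X : Finset β} {y : β} (hX : ∀ x ∈ X, C.Adj x y) :
    C.IsIndepSet X :=
  fun a ha b hb _ hab => hc.not_adj_of_adj_adj hab (hX b hb) (hX a ha)

lemma nonempty_left : Nonempty V := by
  by_contra hV
  obtain ⟨y⟩ : Nonempty β := Fintype.card_pos_iff.1 (by have := hc.interedges_lt; omega)
  exact hc.not_isPackingOn_univ (fun _ => y) ⟨fun a => (hV ⟨a⟩).elim, fun a => (hV ⟨a⟩).elim⟩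

lemma nonempty_right : Nonempty β :=
  Fintype.card_pos_iff.1 (by have := hc.interedges_lt; omega)

lemma exists_isPackingOn_of_ne_univ {T : Finset V} (hT : T ≠ univ) :
    ∃ g : V → β, IsPackingOn H C T g := by
  have := card_interedges_self_mono (H := H) (subset_univ T)
  obtain ⟨g, -, hg⟩ := hc.exists_isPackingOn T hT univ
    ((card_le_univ T).trans hc.card_le) (this.trans_lt hc.interedges_lt)
  exact ⟨g, hg⟩

lemma indepNum_lt_card : C.indepNum < Fintype.card V := by
  by_contra! hle
  have := hc.nonempty_right
  obtain ⟨K, hK, hcard⟩ := C.exists_isNIndepSet_indepNum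
  obtain ⟨g, hg, hinj⟩ := exists_forall_mem_injOn (T := (univ : Finset V)) fun _ _ => hcard ▸ hle
  exact hc.not_isPackingOn_univ g (isPackingOn_of_isIndepSet hK hg hinj)

lemma degree_le_indepNum [DecidableRel C.Adj] (x : β) : C.degree x ≤ C.indepNum := by
  rw [← card_neighborFinset_eq_degree]
  refine IsIndepSet.card_le_indepNum ?_
  rw [coe_neighborFinset]
  exact isIndepSet_neighborSet_of_triangleFree C hc.cliqueFree x

lemma card_le_card_candidates_add_mul_indepNum (B : Finset β) (S : Finset V) (g : V → β) :
    Fintype.card β ≤ #(candidates C B S g) + #B + #S * C.indepNum := by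
  classical
  exact card_le_card_candidates_add hc.degree_le_indepNum B S g

lemma card_le_card_sub_one_add_degree_mul (v : V) :
    Fintype.card β ≤ Fintype.card V - 1 + H.degree v * C.indepNum := by
  classical
  by_contra! hlt
  have hv : univ.erase v ≠ univ := (erase_ssubset (mem_univ v)).ne
  obtain ⟨g, hg⟩ := hc.exists_isPackingOn_of_ne_univ hv
  have hcount := hc.card_le_card_candidates_add_mul_indepNum ((univ.erase v).image g)
    (H.neighborFinset v) g
  have himage : #((univ.erase v).image g) ≤ Fintype.card V - 1 :=
    card_image_le.trans (card_erase_of_mem (mem_univ v)).le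
  rw [card_neighborFinset_eq_degree] at hcount
  obtain ⟨y, hy⟩ : (candidates C ((univ.erase v).image g) (H.neighborFinset v) g).Nonempty :=
    card_pos.1 (by omega)
  obtain ⟨hyimage, hyadj⟩ := mem_candidates.1 hy
  have hext := hg.insert_update (notMem_erase v univ) (y := y)
    (fun a ha h => hyimage (h ▸ mem_image_of_mem g ha)) fun a _ ha => hyadj a (by simpa using ha)
  rw [insert_erase (mem_univ v)] at hext
  exact hc.not_isPackingOn_univ _ hext

lemma false_of_isPackingOn_compl [DecidableEq V] {S : Finset V} {g g' : V → β}
    (hS : IsPackingOn H C S g) (hS' : IsPackingOn H C Sᶜ g')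
    (hne : ∀ a ∈ S, ∀ b ∈ Sᶜ, g a ≠ g' b)
    (hadj : ∀ a ∈ S, ∀ b ∈ Sᶜ, H.Adj a b → ¬ C.Adj (g a) (g' b)) : False := by
  have := hS.union_ite hS' (fun a ha b hb _ => hne a ha b hb) fun a ha b hb _ => hadj a ha b hb
  rw [union_compl] at this
  exact hc.not_isPackingOn_univ _ this

lemma exists_adj_notMem_of_degree_pos (hdeg : ∀ v, 0 < H.degree v) {S : Finset V}
    (hS : S.Nonempty) (hS' : S ≠ univ) : ∃ a ∈ S, ∃ b ∉ S, H.Adj a b := by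
  classical
  by_contra! hclosed
  have hsplit := card_interedges_univ_eq_add_compl hclosed
  have hcard : #S ≤ #(H.interedges S S) := by
    rw [card_interedges_eq_sum_card_neighborFinset_inter, card_eq_sum_ones]
    refine sum_le_sum fun v hv => ?_
    rw [inter_eq_left.2 fun w hw => by_contra fun h => hclosed v hv w h (by simpa using hw),
      card_neighborFinset_eq_degree]
    exact hdeg v
  obtain ⟨g, hg⟩ := hc.exists_isPackingOn_of_ne_univ hS'
  have himage : #(S.image g) ≤ #S := card_image_le
  have hcompl := card_add_card_compl S
  have hcompl' := card_add_card_compl (S.image g)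
  have hN := hc.card_le
  have hN' := hc.interedges_lt
  obtain ⟨g', hg'Y, hg'⟩ := hc.exists_isPackingOn Sᶜ (by simpa using hS.ne_empty) (S.image g)ᶜ
    (by omega) (by omega)
  exact hc.false_of_isPackingOn_compl hg hg'
    (fun a ha b hb hab => mem_compl.1 (hg'Y b hb) (hab ▸ mem_image_of_mem g ha))
    fun a ha b hb hab => (hclosed a ha b (mem_compl.1 hb) hab).elim

lemma connected : H.Connected := by
  classical
  have hdeg (v : V) : 0 < H.degree v := by
    by_contra hv
    have hN := hc.card_le_card_sub_one_add_degree_mul v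
    have hV := Fintype.card_pos_iff.2 hc.nonempty_left
    have := hc.card_le
    rw [Nat.eq_zero_of_not_pos hv, zero_mul] at hN
    omega
  obtain ⟨v⟩ := hc.nonempty_left
  refine (connected_iff_exists_forall_reachable H).2 ⟨v, fun w => by_contra fun hw => ?_⟩
  obtain ⟨a, ha, b, hb, hab⟩ := hc.exists_adj_notMem_of_degree_pos hdeg
    (S := {x | H.Reachable v x}) ⟨v, by simp⟩ fun h => hw (by simpa using h.ge (mem_univ w))
  simp only [mem_filter, mem_univ, true_and] at ha hb
  exact hb (ha.trans hab.reachable)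

lemma two_le_minDegree : 2 ≤ H.minDegree := by
  by_contra! hlt
  have := hc.nonempty_left
  obtain ⟨v, hv⟩ := H.exists_minimal_degree_vertex
  have hN := hc.card_le_card_sub_one_add_degree_mul v
  have hmul : H.degree v * C.indepNum ≤ 1 * C.indepNum := Nat.mul_le_mul_right _ (by omega)
  have htree := hc.connected.card_vert_le_card_edgeSet_add_one
  rw [Nat.card_eq_fintype_card, Nat.card_eq_fintype_card, ← edgeFinset_card] at htree
  have hedges := card_interedges_univ_univ (H := H)
  have := hc.indepNum_lt_card
  have := hc.interedges_lt
  omega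

lemma indepNum_add_deficiency : C.indepNum + deficiency V C = Fintype.card V :=
  Nat.add_sub_cancel' hc.indepNum_lt_card.le

lemma deficiency_pos : 0 < deficiency V C :=
  Nat.sub_pos_of_lt hc.indepNum_lt_card

lemma minDegree_mul_card_add_excess_lt :
    H.minDegree * Fintype.card V + excess H univ < Fintype.card β :=
  card_interedges_univ_univ_eq_add_excess (H := H) ▸ hc.interedges_lt

lemma minDegree_mul_deficiency_add_excess_lt :
    H.minDegree * deficiency V C + excess H univ + 2 ≤ Fintype.card V := by
  have := hc.nonempty_left
  obtain ⟨v, hv⟩ := H.exists_minimal_degree_vertex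
  have hN := hc.card_le_card_sub_one_add_degree_mul v
  have hN' := hc.minDegree_mul_card_add_excess_lt
  rw [← hv] at hN
  rw [← hc.indepNum_add_deficiency, mul_add] at hN'
  omega

variable [DecidableEq V]

lemma card_candidates_id_le {X B : Finset β} {W : Finset V} {m : ℕ} (hX : C.IsIndepSet X)
    (hXB : X ⊆ B) (hW : W.Nonempty) (hWX : #W ≤ #X) (hWm : #Wᶜ ≤ m + 1)
    (hWm' : #(H.interedges Wᶜ Wᶜ) ≤ m) : #(candidates C B X id) ≤ m := by
  by_contra! hlt
  have := hc.nonempty_right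
  obtain ⟨g, hgX, hinj⟩ := exists_forall_mem_injOn fun _ _ => hWX
  obtain ⟨g', hg'Y, hg'⟩ := hc.exists_isPackingOn Wᶜ (by simpa using hW.ne_empty)
    (candidates C B X id) (by omega) (by omega)
  have hfree (b : V) (hb : b ∈ Wᶜ) := mem_candidates.1 (hg'Y b hb)
  exact hc.false_of_isPackingOn_compl (isPackingOn_of_isIndepSet hX hgX hinj) hg'
    (fun a ha b hb hab => (hfree b hb).1 (hab ▸ hXB (hgX a ha)))
    fun a ha b hb _ => (hfree b hb).2 _ (hgX a ha)

lemma card_le_of_complete_bipartite {X Y : Finset β} (hXY : ∀ x ∈ X, ∀ y ∈ Y, C.Adj x y)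
    {W W' : Finset V} (hW : W.Nonempty) (hW' : W'.Nonempty) (hWX : #W ≤ #X) (hWY : #W' ≤ #Y)
    {m m' : ℕ} (hm : #Wᶜ ≤ m + 1) (hm' : #W'ᶜ ≤ m' + 1) (hWm : #(H.interedges Wᶜ Wᶜ) ≤ m)
    (hWm' : #(H.interedges W'ᶜ W'ᶜ) ≤ m') : Fintype.card β ≤ #X + #Y + m + m' := by
  classical
  obtain ⟨x₀, hx₀⟩ : X.Nonempty := card_pos.1 (hW.card_pos.trans_le hWX)
  obtain ⟨y₀, hy₀⟩ : Y.Nonempty := card_pos.1 (hW'.card_pos.trans_le hWY)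
  have hX : C.IsIndepSet X := hc.isIndepSet_of_forall_adj fun x hx => hXY x hx y₀ hy₀
  have hY : C.IsIndepSet Y := hc.isIndepSet_of_forall_adj fun y hy => (hXY x₀ hx₀ y hy).symm
  have hmissY : #(candidates C (X ∪ Y) Y id) ≤ m' :=
    hc.card_candidates_id_le hY subset_union_right hW' hWY hm' hWm'
  have hmissX : #(candidates C (X ∪ Y) X id) ≤ m :=
    hc.card_candidates_id_le hX subset_union_left hW hWX hm hWm
  -- A vertex joined to both `X` and `Y` would lie in a triangle.
  have hcover : univ ⊆ (X ∪ Y) ∪ (candidates C (X ∪ Y) X id ∪ candidates C (X ∪ Y) Y id) := by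
    intro z _
    by_contra! hz
    simp only [mem_union, mem_candidates, id, not_or, not_and, not_forall, not_not] at hz
    obtain ⟨⟨hzX, hzY⟩, hzX', hzY'⟩ := hz
    obtain ⟨x, hx, hxz⟩ := hzX' ⟨hzX, hzY⟩
    obtain ⟨y, hy, hyz⟩ := hzY' ⟨hzX, hzY⟩
    exact hc.not_adj_of_adj_adj hxz hyz.symm (hXY x hx y hy)
  have hcard := card_le_card hcover
  rw [card_univ] at hcard
  have := card_union_le (X ∪ Y) (candidates C (X ∪ Y) X id ∪ candidates C (X ∪ Y) Y id)
  have := card_union_le X Y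
  have := card_union_le (candidates C (X ∪ Y) X id) (candidates C (X ∪ Y) Y id)
  omega

end MinimalCounterexample

/-! ### Adjacent vertices of minimum degree -/

namespace MinimalCounterexample

variable {V β : Type*} [Fintype V] [Fintype β] {H : SimpleGraph V} [DecidableRel H.Adj]
  {C : SimpleGraph β} (hc : MinimalCounterexample H C)

include hc

lemma disjoint_of_forall_ne_adj {A B : Finset β} (hA : 3 ≤ #A) (hB : 2 ≤ #B)
    (hAB : ∀ x ∈ A, ∀ y ∈ B, x ≠ y → C.Adj x y) : Disjoint A B := by
  classical
  refine disjoint_left.2 fun z hzA hzB => ?_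
  obtain ⟨y, hyB, hyz⟩ := exists_mem_ne (one_lt_two.trans_le hB) z
  obtain ⟨x, hxA, hx⟩ : ∃ x ∈ A, x ∉ ({y, z} : Finset β) :=
    exists_mem_notMem_of_card_lt_card (card_le_two.trans_lt hA)
  simp only [mem_insert, mem_singleton, not_or] at hx
  exact hc.not_adj_of_adj_adj (hAB x hxA z hzB hx.2) (hAB z hzA y hyB hyz.symm)
    (hAB x hxA y hyB hx.1)

lemma adj_of_mem_candidates [DecidableEq V] [DecidableEq β] {v w : V} (hvw : H.Adj v w) {g : V → β}
    (hg : IsPackingOn H C {v, w}ᶜ g) {x y : β} (hxy : x ≠ y)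
    (hx : x ∈ candidates C (({v, w}ᶜ : Finset V).image g) ((H.neighborFinset v).erase w) g)
    (hy : y ∈ candidates C (({v, w}ᶜ : Finset V).image g) ((H.neighborFinset w).erase v) g) :
    C.Adj x y := by
  by_contra hnadj
  have hv : v ∉ ({v, w}ᶜ : Finset V) := by simp
  have hw : w ∉ insert v ({v, w}ᶜ : Finset V) := by simp [hvw.ne']
  simp only [mem_candidates, mem_image, mem_compl, mem_insert, mem_singleton, not_or, not_exists,
    not_and, mem_erase, mem_neighborFinset] at hx hy
  have hgv := hg.insert_update hv (y := x) (fun a ha => hx.1 a (by simpa using ha))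
    fun a ha hva => hx.2 a ⟨by rintro rfl; simp at ha, hva⟩
  have hgvw := hgv.insert_update hw (y := y) ?_ ?_
  · have huniv : insert w (insert v ({v, w}ᶜ : Finset V)) = univ := by
      ext u
      simp only [mem_insert, mem_compl, mem_singleton, mem_univ, iff_true]
      tauto
    exact hc.not_isPackingOn_univ _ (huniv ▸ hgvw)
  · intro a ha
    rcases mem_insert.1 ha with rfl | ha
    · rwa [Function.update_self]
    · rw [Function.update_of_ne (ne_of_mem_of_not_mem ha hv)]
      exact hy.1 a (by simpa using ha)
  · intro a ha hwa
    rcases mem_insert.1 ha with rfl | ha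
    · rwa [Function.update_self]
    · have hav := ne_of_mem_of_not_mem ha hv
      rw [Function.update_of_ne hav]
      exact hy.2 a ⟨hav, hwa⟩

lemma le_card_candidates_of_degree_eq_minDegree [DecidableEq V] [DecidableEq β] {v w : V}
    (hvw : H.Adj v w) (hv : H.degree v = H.minDegree) (g : V → β) :
    (H.minDegree - 1) * deficiency V C + excess H univ + 3 ≤
      #(candidates C (({v, w}ᶜ : Finset V).image g) ((H.neighborFinset v).erase w) g) := by
  have hcount := hc.card_le_card_candidates_add_mul_indepNum (({v, w}ᶜ : Finset V).image g)
    ((H.neighborFinset v).erase w) g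
  have himage : #(({v, w}ᶜ : Finset V).image g) + 2 ≤ Fintype.card V := by
    rw [← card_pair hvw.ne, ← card_compl_add_card {v, w}]
    exact Nat.add_le_add_right card_image_le _
  rw [card_erase_of_mem (by simpa using hvw), card_neighborFinset_eq_degree, hv] at hcount
  have hN := hc.minDegree_mul_card_add_excess_lt
  obtain ⟨k, hk⟩ := Nat.exists_eq_add_of_le' hc.two_le_minDegree
  have hk' : H.minDegree - 1 = k + 1 := by omega
  rw [hk'] at hcount ⊢
  rw [hk, ← hc.indepNum_add_deficiency] at hN
  rw [← hc.indepNum_add_deficiency] at himage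
  linarith

lemma exists_complete_bipartite {v w : V} (hvw : H.Adj v w)
    (hv : H.degree v = H.minDegree) (hw : H.degree w = H.minDegree) :
    ∃ X Y : Finset β, #X = (H.minDegree - 1) * deficiency V C + excess H univ + 3 ∧ #Y = #X ∧
      ∀ x ∈ X, ∀ y ∈ Y, C.Adj x y := by
  classical
  obtain ⟨g, hg⟩ := hc.exists_isPackingOn_of_ne_univ (T := {v, w}ᶜ)
    fun h => by simpa using h.ge (mem_univ v)
  have hA := hc.le_card_candidates_of_degree_eq_minDegree hvw hv g
  have hB := hc.le_card_candidates_of_degree_eq_minDegree hvw.symm hw g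
  rw [pair_comm] at hB
  have hAB := fun x hx y hy hxy => hc.adj_of_mem_candidates hvw hg (x := x) (y := y) hxy hx hy
  have hdisj := hc.disjoint_of_forall_ne_adj (by omega) (by omega) hAB
  obtain ⟨X, hXA, hX⟩ := exists_subset_card_eq hA
  obtain ⟨Y, hYB, hY⟩ := exists_subset_card_eq hB
  exact ⟨X, Y, hX, hY.trans hX.symm, fun x hx y hy =>
    hAB x (hXA hx) y (hYB hy) (disjoint_iff_ne.1 hdisj x (hXA hx) y (hYB hy))⟩

lemma three_mul_lt_card_of_adj_of_degree_eq_minDegree {v w : V} (hvw : H.Adj v w)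
    (hv : H.degree v = H.minDegree) (hw : H.degree w = H.minDegree) :
    3 * ((H.minDegree - 1) * deficiency V C + excess H univ + 3) < Fintype.card V := by
  classical
  by_contra! hle
  obtain ⟨X, Y, hX, hY, hXY⟩ := hc.exists_complete_bipartite hvw hv hw
  rw [← hX] at hle
  have hd := hc.two_le_minDegree
  have hN := hc.minDegree_mul_card_add_excess_lt
  have hQ := card_interedges_univ_univ_eq_add_excess (H := H)
  have ht := hc.deficiency_pos
  have hXV : #X ≤ Fintype.card V := by
    have hn := hc.minDegree_mul_deficiency_add_excess_lt
    obtain ⟨k, hk⟩ := Nat.exists_eq_add_of_le' hd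
    have hk' : H.minDegree - 1 = k + 1 := by omega
    rw [hX, hk']
    rw [hk] at hn
    linarith
  have hVQ : 2 * Fintype.card V ≤ H.minDegree * Fintype.card V := Nat.mul_le_mul_right _ hd
  obtain ⟨W, hW, hWe⟩ := exists_card_eq_two_mul_card_interedges_compl_add_le (H := H) hXV hle
    (by omega)
  have hWne : W.Nonempty := card_pos.1 (by omega)
  have hWc := card_add_card_compl W
  have hm := le_max_left #(H.interedges Wᶜ Wᶜ) (#Wᶜ - 1)
  have hm' : #Wᶜ ≤ max #(H.interedges Wᶜ Wᶜ) (#Wᶜ - 1) + 1 := by omega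
  have := hc.card_le_of_complete_bipartite hXY hWne hWne hW.le (by omega) hm' hm' hm hm
  omega

end MinimalCounterexample

/-! ### Anchored embeddings -/

section Neighborhood

variable {V : Type*} [Fintype V] [DecidableEq V]

/-- The union `N(T)` of the neighbourhoods of the vertices of `T`; it may meet `T`. -/
def neighborhood (H : SimpleGraph V) [DecidableRel H.Adj] (T : Finset V) : Finset V :=
  T.biUnion fun v => H.neighborFinset v

/-- The closed neighbourhood `N[T] = T ∪ N(T)`. -/
def closedNeighborhood (H : SimpleGraph V) [DecidableRel H.Adj] (T : Finset V) : Finset V :=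
  T ∪ neighborhood H T

variable {H : SimpleGraph V} [DecidableRel H.Adj] {S T : Finset V} {u v : V}

@[simp]
lemma mem_neighborhood : u ∈ neighborhood H T ↔ ∃ v ∈ T, H.Adj v u := by
  simp [neighborhood]

lemma mem_closedNeighborhood : u ∈ closedNeighborhood H T ↔ u ∈ T ∨ ∃ v ∈ T, H.Adj v u := by
  simp [closedNeighborhood]

lemma neighborhood_insert :
    neighborhood H (insert v T) = H.neighborFinset v ∪ neighborhood H T :=
  biUnion_insert

lemma neighborhood_union : neighborhood H (S ∪ T) = neighborhood H S ∪ neighborhood H T :=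
  union_biUnion

lemma subset_closedNeighborhood : T ⊆ closedNeighborhood H T :=
  subset_union_left

lemma card_neighborhood_le {d : ℕ} (hT : ∀ v ∈ T, H.degree v ≤ d) :
    #(neighborhood H T) ≤ d * #T := by
  rw [mul_comm]
  exact card_biUnion_le_card_mul _ _ _ hT

lemma closedNeighborhood_sdiff_subset : closedNeighborhood H T \ T ⊆ neighborhood H T :=
  sdiff_le_iff.2 le_rfl

end Neighborhood

section Anchored

variable {V β : Type*} [Fintype V] [DecidableEq V]

/-- `g` is injective on `N[T]`, maps `T` outside `K` and `N(T) \ T` into `K`, and preserves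
non-adjacency along the edges of `H` that meet `T`. When `K` is independent in `C`, such a map
extends to all of `V` as soon as `K` has room for the vertices outside `N[T]`. -/
structure IsAnchored (H : SimpleGraph V) [DecidableRel H.Adj] (C : SimpleGraph β) (K : Finset β)
    (T : Finset V) (g : V → β) : Prop where
  injOn : Set.InjOn g (closedNeighborhood H T)
  mem_iff : ∀ a ∈ closedNeighborhood H T, g a ∈ K ↔ a ∉ T
  not_adj : ∀ a ∈ T, ∀ b, H.Adj a b → ¬ C.Adj (g a) (g b)

namespace IsAnchored

variable {H : SimpleGraph V} [DecidableRel H.Adj] {C : SimpleGraph β} {K : Finset β}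
  {T : Finset V} {g : V → β}

lemma empty (g : V → β) : IsAnchored H C K ∅ g := by
  constructor <;> simp [closedNeighborhood, neighborhood]

lemma isPackingOn (hg : IsAnchored H C K T g) (hK : C.IsIndepSet K) :
    IsPackingOn H C (closedNeighborhood H T) g where
  injOn := hg.injOn
  not_adj a ha b hb hab := by
    by_cases haT : a ∈ T
    · exact hg.not_adj a haT b hab
    by_cases hbT : b ∈ T
    · exact fun h => hg.not_adj b hbT a hab.symm h.symm
    have hne : g a ≠ g b := fun h => hab.ne (hg.injOn ha hb h)
    exact hK ((hg.mem_iff a ha).2 haT) ((hg.mem_iff b hb).2 hbT) hne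

lemma insert (hg : IsAnchored H C K T g) {v : V} (hv : v ∉ T) {g' : V → β}
    (heq : ∀ a ∈ closedNeighborhood H T, a ≠ v → g' a = g a)
    (hinj : Set.InjOn g' ↑(H.neighborFinset v \ closedNeighborhood H T))
    (hmem : ∀ u ∈ H.neighborFinset v \ closedNeighborhood H T, g' u ∈ K)
    (hne : ∀ u ∈ H.neighborFinset v \ closedNeighborhood H T,
      ∀ a ∈ (closedNeighborhood H T \ T).erase v, g' u ≠ g a)
    (hvK : g' v ∉ K) (hvT : ∀ a ∈ T, g a ≠ g' v)
    (hadj : ∀ a, H.Adj v a → ¬ C.Adj (g' a) (g' v)) : IsAnchored H C K (insert v T) g' := by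
  have hcl (a : V) (ha : a ∈ closedNeighborhood H (Insert.insert v T)) :
      a = v ∨ (a ≠ v ∧ a ∈ closedNeighborhood H T) ∨
        (a ≠ v ∧ a ∉ T ∧ a ∈ H.neighborFinset v \ closedNeighborhood H T) := by
    simp only [mem_closedNeighborhood, mem_sdiff, mem_neighborFinset] at ha ⊢
    grind
  have hmem_iff : ∀ a ∈ closedNeighborhood H (Insert.insert v T),
      g' a ∈ K ↔ a ∉ Insert.insert v T := by
    intro a ha
    have := hg.mem_iff a
    grind
  refine ⟨fun a ha b hb hab => ?_, hmem_iff, fun a ha b hab => ?_⟩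
  · have hiff := hab ▸ hmem_iff a ha
    have := hmem_iff b hb
    have := hg.injOn (x₁ := a) (x₂ := b)
    have := hinj (x₁ := a) (x₂ := b)
    grind
  · obtain rfl | haT := mem_insert.1 ha
    · exact fun h => hadj b hab h.symm
    obtain rfl | hbv := eq_or_ne b v
    · exact hadj a hab.symm
    rw [heq a (subset_closedNeighborhood haT) (ne_of_mem_of_not_mem haT hv),
      heq b (mem_closedNeighborhood.2 (.inr ⟨a, haT, hab⟩)) hbv]
    exact hg.not_adj a haT b hab

lemma exists_insert [DecidableEq β] (hg : IsAnchored H C K T g) {v : V} (hv : v ∉ T) {h : V → β}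
    {y : β} (hinj : Set.InjOn h ↑(H.neighborFinset v \ closedNeighborhood H T))
    (hmem : ∀ u ∈ H.neighborFinset v \ closedNeighborhood H T,
      h u ∈ K \ ((closedNeighborhood H T \ T).erase v).image g)
    (hyK : y ∉ K) (hyT : y ∉ T.image g)
    (hadj : ∀ u ∈ H.neighborFinset v ∩ closedNeighborhood H T, ¬ C.Adj (g u) y)
    (hadj' : ∀ u ∈ H.neighborFinset v \ closedNeighborhood H T, ¬ C.Adj (h u) y) :
    ∃ g', IsAnchored H C K (Insert.insert v T) g' := by
  let g' := Function.update (fun a => if a ∈ closedNeighborhood H T then g a else h a) v y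
  have hg'v : g' v = y := Function.update_self ..
  have hg'ne {a : V} (hav : a ≠ v) : g' a = if a ∈ closedNeighborhood H T then g a else h a :=
    Function.update_of_ne hav ..
  have hvN : v ∉ H.neighborFinset v := H.notMem_neighborFinset_self v
  have hg'h : ∀ u ∈ H.neighborFinset v \ closedNeighborhood H T, g' u = h u := by grind
  refine ⟨g', hg.insert hv (by grind) (hinj.congr fun u hu => (hg'h u hu).symm) (by grind)
    (by grind) (by grind) (by grind) fun a ha => ?_⟩
  rw [← mem_neighborFinset] at ha
  grind

end IsAnchored

end Anchored

lemma MinimalCounterexample.false_of_isAnchored {V β : Type*} [Fintype V] [DecidableEq V]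
    [Fintype β] {H : SimpleGraph V} [DecidableRel H.Adj] {C : SimpleGraph β}
    (hc : MinimalCounterexample H C) {K : Finset β} (hK : C.IsNIndepSet C.indepNum K)
    {T : Finset V} {g : V → β} (hg : IsAnchored H C K T g) (hT : deficiency V C ≤ #T) : False := by
  classical
  have := hc.nonempty_right
  have hboundary := card_sdiff_add_card_eq_card (subset_closedNeighborhood (H := H) (T := T))
  have himage : #((closedNeighborhood H T \ T).image g) ≤ #(closedNeighborhood H T \ T) :=
    card_image_le
  have hroom := le_card_sdiff ((closedNeighborhood H T \ T).image g) K
  have hcompl := card_add_card_compl (closedNeighborhood H T)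
  have hdef := hc.indepNum_add_deficiency
  rw [hK.card_eq] at hroom
  obtain ⟨h, hhK, hinj⟩ := exists_forall_mem_injOn (T := (closedNeighborhood H T)ᶜ)
    (A := fun _ => K \ (closedNeighborhood H T \ T).image g) fun _ _ => by omega
  have hhK' (b : V) (hb : b ∈ (closedNeighborhood H T)ᶜ) : h b ∈ K := (mem_sdiff.1 (hhK b hb)).1
  refine hc.false_of_isPackingOn_compl (hg.isPackingOn hK.isIndepSet)
    (isPackingOn_of_isIndepSet hK.isIndepSet hhK' hinj) (fun a ha b hb hab => ?_)
    fun a ha b hb hab => ?_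
  · have haT : a ∉ T := (hg.mem_iff a ha).1 (hab ▸ hhK' b hb)
    exact (mem_sdiff.1 (hhK b hb)).2 (hab ▸ mem_image_of_mem g (mem_sdiff.2 ⟨ha, haT⟩))
  · have haT : a ∉ T := fun haT => mem_compl.1 hb (mem_closedNeighborhood.2 (.inr ⟨a, haT, hab⟩))
    have hga := (hg.mem_iff a ha).2 haT
    intro hC
    exact hK.isIndepSet hga (hhK' b hb) hC.ne hC

section VertexCover

variable {V : Type*} [Fintype V] [DecidableEq V] {H : SimpleGraph V} [DecidableRel H.Adj]
  {M S : Finset V}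

lemma card_interedges_compl_eq_zero (hM : H.IsVertexCover M) : #(H.interedges Mᶜ Mᶜ) = 0 := by
  rw [card_eq_zero, eq_empty_iff_forall_notMem]
  rintro ⟨a, b⟩ hab
  obtain ⟨ha, hb, hab⟩ := H.mk_mem_interedges_iff.1 hab
  exact (hM hab).elim (mem_compl.1 ha) (mem_compl.1 hb)

lemma exists_card_mul_card_interedges_erase_le (hM : H.IsVertexCover (M ∪ Sᶜ : Finset V))
    (hMS : M ⊆ S) (hne : M.Nonempty) : ∃ u ∈ M,
      #M * #(H.interedges (S.erase u) (S.erase u)) + #(H.interedges S S)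
        ≤ #M * #(H.interedges S S) := by
  obtain ⟨u, hu, hmax⟩ := exists_max_image M (fun u => #(H.neighborFinset u ∩ S)) hne
  have hrest : #(H.interedges (S \ M) (S \ M)) = 0 := by
    rw [← card_interedges_compl_eq_zero hM, compl_union, compl_compl, inter_comm,
      ← sdiff_eq_inter_compl]
  have hcover : #(H.interedges S S) ≤ 2 * #(H.interedges M S) := by
    have hle : #(H.interedges (S \ M) M) ≤ #(H.interedges S M) :=
      card_le_card (H.interedges_mono sdiff_subset Subset.rfl)
    have hsplit := card_interedges_union_left (H := H) (disjoint_sdiff (s := M) (t := S)) S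
    have hsplit' := card_interedges_union_right (H := H) (S \ M) (disjoint_sdiff (s := M) (t := S))
    rw [union_sdiff_of_subset hMS] at hsplit hsplit'
    rw [card_interedges_comm S M] at hle
    omega
  have hmean : #(H.interedges M S) ≤ #M * #(H.neighborFinset u ∩ S) := by
    rw [card_interedges_eq_sum_card_neighborFinset_inter, ← smul_eq_mul]
    exact sum_le_card_nsmul _ _ _ hmax
  refine ⟨u, hu, ?_⟩
  rw [← card_interedges_erase_add (hMS hu)] at hcover ⊢
  linarith

lemma exists_subset_card_mul_card_interedges_compl_le (hM : H.IsVertexCover M) {f : ℕ}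
    (hf : f ≤ #M) : ∃ W ⊆ M, #W = f ∧
      #M * #(H.interedges Wᶜ Wᶜ) ≤ (#M - f) * #(H.interedges univ univ) := by
  induction f with
  | zero => exact ⟨∅, empty_subset _, rfl, by simp⟩
  | succ f ih =>
    obtain ⟨W, hWM, hW, hWe⟩ := ih (by omega)
    have hcard : #(M \ W) = #M - f := by rw [card_sdiff_of_subset hWM, hW]
    obtain ⟨u, hu, hue⟩ := exists_card_mul_card_interedges_erase_le (H := H) (M := M \ W) (S := Wᶜ)
      (by rwa [compl_compl, sdiff_union_of_subset hWM]) (fun x hx => by simp_all)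
      (card_pos.1 (by omega))
    rw [mem_sdiff] at hu
    refine ⟨insert u W, insert_subset hu.1 hWM, by rw [card_insert_of_notMem hu.2, hW], ?_⟩
    obtain ⟨k, hk⟩ := Nat.exists_eq_add_of_le hf
    rw [hcard, show #M - f = k + 1 by omega] at hue
    rw [show #M - f = k + 1 by omega] at hWe
    rw [compl_insert, show #M - (f + 1) = k by omega]
    have hstep : (k + 1) * #(H.interedges (Wᶜ.erase u) (Wᶜ.erase u)) ≤
        k * #(H.interedges Wᶜ Wᶜ) := by linarith
    refine Nat.le_of_mul_le_mul_left ?_ k.succ_pos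
    calc (k + 1) * (#M * #(H.interedges (Wᶜ.erase u) (Wᶜ.erase u)))
        = #M * ((k + 1) * #(H.interedges (Wᶜ.erase u) (Wᶜ.erase u))) := by ring
      _ ≤ #M * (k * #(H.interedges Wᶜ Wᶜ)) := Nat.mul_le_mul_left _ hstep
      _ = k * (#M * #(H.interedges Wᶜ Wᶜ)) := by ring
      _ ≤ k * ((k + 1) * #(H.interedges univ univ)) := Nat.mul_le_mul_left _ hWe
      _ = (k + 1) * (k * #(H.interedges univ univ)) := by ring

end VertexCover

/-! ### Building up sets of independent minimum-degree vertices -/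

section FreshlyBuilt

variable {V : Type*} [Fintype V]

/-- The vertices whose degree exceeds the minimum degree. -/
def hubs (H : SimpleGraph V) [DecidableRel H.Adj] : Finset V :=
  {v | H.degree v ≠ H.minDegree}

/-- Every vertex of minimum degree has all of its neighbours in `S` or none of them. -/
def IsSaturated (H : SimpleGraph V) [DecidableRel H.Adj] (S : Finset V) : Prop :=
  ∀ ⦃v u⦄, H.degree v = H.minDegree → u ∈ S → H.Adj v u → H.neighborFinset v ⊆ S

variable [DecidableEq V]

/-- The vertices of minimum degree with all neighbours in `S`. -/
def enclosed (H : SimpleGraph V) [DecidableRel H.Adj] (S : Finset V) : Finset V :=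
  {v | H.degree v = H.minDegree ∧ H.neighborFinset v ⊆ S}

/-- The set consists of minimum-degree vertices that can be added one at a time in such a way that
each has a neighbour not adjacent to any vertex added before. -/
inductive FreshlyBuilt (H : SimpleGraph V) [DecidableRel H.Adj] : Finset V → Prop
  | empty : FreshlyBuilt H ∅
  | insert {T : Finset V} {v w : V} : FreshlyBuilt H T → H.degree v = H.minDegree → H.Adj v w →
      w ∉ neighborhood H T → FreshlyBuilt H (insert v T)

/-- The state of the construction of a large freshly built set `T`: every vertex of `S` and every
vertex enclosed by `S` is paid for by the vertices of `T` and the excess of `S`. -/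
structure IsCharged (H : SimpleGraph V) [DecidableRel H.Adj] (S T : Finset V) : Prop where
  subset_hubs : S ⊆ hubs H
  isSaturated : IsSaturated H S
  freshlyBuilt : FreshlyBuilt H T
  neighborhood_subset : neighborhood H T ⊆ S
  card_le : #(enclosed H S) + #S ≤ H.minDegree * #T + excess H S

/-- A set `T'` of minimum-degree vertices whose neighbourhood avoids `S` and which can be built
after `T`. The bound on `|N(T')|` holds when every vertex of `T'` but the first shares a neighbour
with an earlier one. -/
structure IsBlock (H : SimpleGraph V) [DecidableRel H.Adj] (S T T' : Finset V) : Prop where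
  nonempty : T'.Nonempty
  degree_eq : ∀ v ∈ T', H.degree v = H.minDegree
  disjoint : Disjoint (neighborhood H T') S
  freshlyBuilt : FreshlyBuilt H (T' ∪ T)
  card_neighborhood_le : #(neighborhood H T') ≤ (H.minDegree - 1) * #T' + 1

variable {H : SimpleGraph V} [DecidableRel H.Adj] {S S' T T' : Finset V} {u v w : V}

omit [DecidableEq V] in
@[simp]
lemma mem_hubs : v ∈ hubs H ↔ H.degree v ≠ H.minDegree := by
  simp [hubs]

@[simp]
lemma mem_enclosed :
    v ∈ enclosed H S ↔ H.degree v = H.minDegree ∧ H.neighborFinset v ⊆ S := by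
  simp [enclosed]

omit [DecidableEq V] in
lemma card_le_excess (hS : S ⊆ hubs H) : #S ≤ excess H S := by
  rw [excess, card_eq_sum_ones]
  refine sum_le_sum fun v hv => ?_
  have := mem_hubs.1 (hS hv)
  have := H.minDegree_le_degree v
  omega

omit [DecidableEq V] in
lemma card_hubs_le_excess : #(hubs H) ≤ excess H univ :=
  (card_le_excess Subset.rfl).trans (excess_mono (subset_univ _))

lemma neighborhood_subset_hubs (hcover : H.IsVertexCover (hubs H))
    (hT : ∀ v ∈ T, H.degree v = H.minDegree) : neighborhood H T ⊆ hubs H := by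
  intro w hw
  obtain ⟨v, hv, hvw⟩ := mem_neighborhood.1 hw
  exact (hcover hvw).resolve_left (by simpa using hT v hv)

omit [DecidableEq V] in
lemma exists_adj_of_minDegree_pos (hd : 0 < H.minDegree) (v : V) : ∃ w, H.Adj v w :=
  (H.degree_pos_iff_exists_adj v).1 (hd.trans_le (H.minDegree_le_degree v))

lemma minDegree_mul_card_enclosed_add (S : Finset V) :
    H.minDegree * #(enclosed H S) + #(H.interedges S (enclosed H S)ᶜ) =
      H.minDegree * #S + excess H S := by
  have henclosed : #(H.interedges S (enclosed H S)) = H.minDegree * #(enclosed H S) := by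
    rw [card_interedges_comm, card_interedges_eq_sum_card_neighborFinset_inter, mul_comm,
      ← smul_eq_mul, ← sum_const]
    refine sum_congr rfl fun v hv => ?_
    obtain ⟨hdeg, hsub⟩ := mem_enclosed.1 hv
    rw [inter_eq_left.2 hsub, card_neighborFinset_eq_degree, hdeg]
  rw [← sum_degree_eq_minDegree_mul_add_excess, ← card_interedges_univ_right, ← henclosed,
    ← card_interedges_union_right S disjoint_compl_right, union_compl]

omit [DecidableEq V] in
lemma IsSaturated.union [DecidableEq V] (hS : IsSaturated H S) (hS' : IsSaturated H S') :
    IsSaturated H (S ∪ S') := by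
  intro v u hv hu hvu
  obtain hu | hu := mem_union.1 hu
  · exact (hS hv hu hvu).trans subset_union_left
  · exact (hS' hv hu hvu).trans subset_union_right

lemma IsSaturated.enclosed_union_subset (hd : 0 < H.minDegree) (hS : IsSaturated H S)
    (hS' : IsSaturated H S') : enclosed H (S ∪ S') ⊆ enclosed H S ∪ enclosed H S' := by
  intro v hv
  obtain ⟨hdeg, hsub⟩ := mem_enclosed.1 hv
  obtain ⟨w, hw⟩ := exists_adj_of_minDegree_pos hd v
  simp only [mem_union, mem_enclosed, hdeg, true_and]
  exact (mem_union.1 (hsub ((H.mem_neighborFinset v w).2 hw))).imp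
    (fun h => hS hdeg h hw) fun h => hS' hdeg h hw

namespace IsBlock

lemma singleton (hS : IsSaturated H S) (hT : FreshlyBuilt H T) (hTS : neighborhood H T ⊆ S)
    (hv : H.degree v = H.minDegree) (hvu : H.Adj v u) (hu : u ∉ S) : IsBlock H S T {v} where
  nonempty := singleton_nonempty v
  degree_eq := by simpa using hv
  disjoint := by
    simp only [neighborhood, singleton_biUnion]
    exact disjoint_left.2 fun a ha haS =>
      hu (hS hv haS ((H.mem_neighborFinset v a).1 ha) ((H.mem_neighborFinset v u).2 hvu))
  freshlyBuilt := by
    rw [singleton_union]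
    exact hT.insert hv hvu fun h => hu (hTS h)
  card_neighborhood_le := by
    simp only [neighborhood, singleton_biUnion, card_neighborFinset_eq_degree, card_singleton]
    omega

lemma insert (h : IsBlock H S T T') (hS : IsSaturated H S) (hTS : neighborhood H T ⊆ S)
    (hv : H.degree v = H.minDegree) (hvu : H.Adj v u) (hu : u ∈ neighborhood H T')
    (hvw : H.Adj v w) (hw : w ∉ neighborhood H T') : IsBlock H S T (insert v T') := by
  have hvS : Disjoint (H.neighborFinset v) S := disjoint_left.2 fun a ha haS =>
    disjoint_left.1 h.disjoint hu
      (hS hv haS ((H.mem_neighborFinset v a).1 ha) ((H.mem_neighborFinset v u).2 hvu))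
  refine ⟨insert_nonempty .., ?_, ?_, ?_, ?_⟩
  · simpa [hv] using h.degree_eq
  · rw [neighborhood_insert]
    exact disjoint_union_left.2 ⟨hvS, h.disjoint⟩
  · rw [insert_union]
    refine h.freshlyBuilt.insert hv hvw ?_
    rw [neighborhood_union, mem_union]
    rintro (hw' | hw')
    · exact hw hw'
    · exact disjoint_left.1 hvS ((H.mem_neighborFinset v w).2 hvw) (hTS hw')
  · have hvT : v ∉ T' := fun hvT => hw (mem_neighborhood.2 ⟨v, hvT, hvw⟩)
    have hcommon : 0 < #(H.neighborFinset v ∩ neighborhood H T') :=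
      card_pos.2 ⟨u, mem_inter.2 ⟨(H.mem_neighborFinset v u).2 hvu, hu⟩⟩
    have hcard := card_union_add_card_inter (H.neighborFinset v) (neighborhood H T')
    have hT' := h.card_neighborhood_le
    rw [card_neighborFinset_eq_degree, hv] at hcard
    rw [neighborhood_insert, card_insert_of_notMem hvT, mul_add, mul_one]
    omega

lemma exists_isSaturated (hS : IsSaturated H S) (hT : FreshlyBuilt H T)
    (hTS : neighborhood H T ⊆ S) (hv : H.degree v = H.minDegree) (hvu : H.Adj v u) (hu : u ∉ S) :
    ∃ T', IsBlock H S T T' ∧ IsSaturated H (neighborhood H T') := by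
  classical
  obtain ⟨T', hT', hmax⟩ := exists_max_image {T' | IsBlock H S T T'} card
    ⟨{v}, by simpa using singleton hS hT hTS hv hvu hu⟩
  replace hT' : IsBlock H S T T' := by simpa using hT'
  refine ⟨T', hT', fun x a hx ha hxa w hxw => ?_⟩
  rw [mem_neighborFinset] at hxw
  by_contra hw
  have hlt := hmax (Insert.insert x T') (by simpa using hT'.insert hS hTS hx hxa ha hxw hw)
  have hxT : x ∉ T' := fun hxT => hw (mem_neighborhood.2 ⟨x, hxT, hxw⟩)
  rw [card_insert_of_notMem hxT] at hlt
  omega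

lemma nonempty_neighborhood (h : IsBlock H S T T') (hd : 0 < H.minDegree) :
    (neighborhood H T').Nonempty := by
  obtain ⟨v, hv⟩ := h.nonempty
  obtain ⟨w, hw⟩ := exists_adj_of_minDegree_pos hd v
  exact ⟨w, mem_neighborhood.2 ⟨v, hv, hw⟩⟩

lemma card_union (h : IsBlock H S T T') (hd : 0 < H.minDegree) (hTS : neighborhood H T ⊆ S) :
    #(T' ∪ T) = #T' + #T := by
  refine card_union_of_disjoint (disjoint_left.2 fun v hv hvT => ?_)
  obtain ⟨w, hw⟩ := exists_adj_of_minDegree_pos hd v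
  exact disjoint_left.1 h.disjoint (mem_neighborhood.2 ⟨v, hv, hw⟩)
    (hTS (mem_neighborhood.2 ⟨v, hvT, hw⟩))

/-- Here `c` is `1` if some edge leaves `N(T')` and its enclosed vertices, and `0` otherwise. -/
lemma card_enclosed_add_le (h : IsBlock H S T T') (hd : 2 ≤ H.minDegree)
    (hcover : H.IsVertexCover (hubs H)) {c : ℕ} (hc : c ≤ 1)
    (hcross : c ≤ #(H.interedges (neighborhood H T') (enclosed H (neighborhood H T'))ᶜ)) :
    #(enclosed H (neighborhood H T')) + #(neighborhood H T') + c ≤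
      H.minDegree * #T' + excess H (neighborhood H T') + 1 := by
  have hcount := minDegree_mul_card_enclosed_add (H := H) (neighborhood H T')
  have hN := h.card_neighborhood_le
  have hT := h.nonempty.card_pos
  obtain ⟨z, hz⟩ := Nat.exists_eq_add_of_le
    (card_le_excess (neighborhood_subset_hubs hcover h.degree_eq))
  obtain ⟨r, hr⟩ := Nat.exists_eq_add_of_le' hd
  rw [hr, show r + 2 - 1 = r + 1 by omega] at hN
  rw [hr, hz] at hcount ⊢
  by_contra! hlt
  have hx : #T' + (#(neighborhood H T') + z) + 1 ≤ #(enclosed H (neighborhood H T')) + c := by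
    linarith
  have := Nat.mul_le_mul_left (r + 2) hx
  nlinarith [Nat.zero_le (r * z), Nat.mul_le_mul_left r hc]

lemma isCharged_union (h : IsBlock H S T T') (hd : 2 ≤ H.minDegree)
    (hcover : H.IsVertexCover (hubs H)) (hS : IsCharged H S T)
    (hT' : IsSaturated H (neighborhood H T'))
    (hcross : 0 < #(H.interedges (neighborhood H T') (enclosed H (neighborhood H T'))ᶜ)) :
    IsCharged H (neighborhood H T' ∪ S) (T' ∪ T) where
  subset_hubs := union_subset (neighborhood_subset_hubs hcover h.degree_eq) hS.subset_hubs
  isSaturated := hT'.union hS.isSaturated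
  freshlyBuilt := h.freshlyBuilt
  neighborhood_subset := by
    rw [neighborhood_union]
    exact union_subset_union_right hS.neighborhood_subset
  card_le := by
    have hblock := h.card_enclosed_add_le hd hcover le_rfl hcross
    have hcharge := hS.card_le
    have henclosed := (card_le_card (hT'.enclosed_union_subset (by omega) hS.isSaturated)).trans
      (card_union_le _ _)
    rw [h.card_union (by omega) hS.neighborhood_subset, card_union_of_disjoint h.disjoint, excess,
      sum_union h.disjoint, mul_add]
    rw [excess] at hblock hcharge
    omega

lemma interedges_neighborhood_compl_enclosed_pos (h : IsBlock H S T T') (hH : H.Connected)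
    (hd : 0 < H.minDegree) (hne : neighborhood H T' ∪ enclosed H (neighborhood H T') ≠ univ) :
    0 < #(H.interedges (neighborhood H T') (enclosed H (neighborhood H T'))ᶜ) := by
  obtain ⟨a, ha, b, hb, hab⟩ := exists_adj_notMem_of_connected hH
    ((h.nonempty_neighborhood hd).mono subset_union_left) hne
  rw [mem_union, not_or] at hb
  have haN : a ∈ neighborhood H T' := (mem_union.1 ha).resolve_right fun ha' =>
    hb.1 ((mem_enclosed.1 ha').2 ((H.mem_neighborFinset a b).2 hab))
  exact card_pos.2 ⟨(a, b), H.mk_mem_interedges_iff.2 ⟨haN, mem_compl.2 hb.2, hab⟩⟩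

end IsBlock

namespace IsCharged

lemma empty (hd : 0 < H.minDegree) : IsCharged H ∅ ∅ where
  subset_hubs := empty_subset _
  isSaturated v u _ hu := by simp at hu
  freshlyBuilt := .empty
  neighborhood_subset := by simp [neighborhood]
  card_le := by
    have : enclosed H ∅ = ∅ := by
      refine eq_empty_of_forall_notMem fun v hv => ?_
      obtain ⟨w, hw⟩ := exists_adj_of_minDegree_pos hd v
      simpa using (mem_enclosed.1 hv).2 ((H.mem_neighborFinset v w).2 hw)
    simp [this]

lemma insert (h : IsCharged H S T) (hu : u ∈ hubs H) (huS : u ∉ S)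
    (hadj : ∀ v, H.degree v = H.minDegree → ¬ H.Adj v u) : IsCharged H (insert u S) T where
  subset_hubs := insert_subset hu h.subset_hubs
  isSaturated v w hv hw hvw := by
    obtain rfl | hw := mem_insert.1 hw
    · exact absurd hvw (hadj v hv)
    · exact (h.isSaturated hv hw hvw).trans (subset_insert u S)
  freshlyBuilt := h.freshlyBuilt
  neighborhood_subset := h.neighborhood_subset.trans (subset_insert u S)
  card_le := by
    have henclosed : enclosed H (Insert.insert u S) ⊆ enclosed H S := by
      intro v hv
      obtain ⟨hdeg, hsub⟩ := mem_enclosed.1 hv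
      refine mem_enclosed.2 ⟨hdeg, fun w hw => mem_of_mem_insert_of_ne (hsub hw) ?_⟩
      rintro rfl
      exact hadj v hdeg (by simpa using hw)
    have := card_le_card henclosed
    have hcharge := h.card_le
    have := mem_hubs.1 hu
    have := H.minDegree_le_degree u
    rw [card_insert_of_notMem huS, excess, sum_insert huS]
    rw [excess] at hcharge
    omega

lemma exists_card_lt (h : IsCharged H S T) (hH : H.Connected) (hd : 2 ≤ H.minDegree)
    (hcover : H.IsVertexCover (hubs H))
    (hlarge : ∀ T, FreshlyBuilt H T → H.minDegree * #T + excess H univ + 1 < Fintype.card V)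
    (hS : S ≠ hubs H) : ∃ S' T', IsCharged H S' T' ∧ #S < #S' := by
  obtain ⟨u, hu, huS⟩ := exists_of_ssubset (h.subset_hubs.ssubset_of_ne hS)
  by_cases hadj : ∀ v, H.degree v = H.minDegree → ¬ H.Adj v u
  · exact ⟨_, _, h.insert hu huS hadj, card_lt_card (ssubset_insert huS)⟩
  push Not at hadj
  obtain ⟨v, hv, hvu⟩ := hadj
  obtain ⟨T', hT', hsat⟩ := IsBlock.exists_isSaturated h.isSaturated h.freshlyBuilt
    h.neighborhood_subset hv hvu huS
  have hpos := hT'.nonempty_neighborhood (by omega)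
  refine ⟨_, _, hT'.isCharged_union hd hcover h hsat
    (hT'.interedges_neighborhood_compl_enclosed_pos hH (by omega) fun huniv => ?_), ?_⟩
  · have hblock := hT'.card_enclosed_add_le hd hcover zero_le_one (Nat.zero_le _)
    have hcard := card_union_le (neighborhood H T') (enclosed H (neighborhood H T'))
    have hexcess := excess_mono (H := H) (subset_univ (neighborhood H T'))
    have := hlarge _ hT'.freshlyBuilt
    rw [hT'.card_union (by omega) h.neighborhood_subset, mul_add] at this
    rw [huniv, card_univ] at hcard
    omega
  · rw [card_union_of_disjoint hT'.disjoint]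
    have := hpos.card_pos
    omega

end IsCharged

lemma exists_freshlyBuilt_card_le (hH : H.Connected) (hd : 2 ≤ H.minDegree)
    (hcover : H.IsVertexCover (hubs H)) :
    ∃ T, FreshlyBuilt H T ∧ Fintype.card V ≤ H.minDegree * #T + excess H univ + 1 := by
  classical
  by_contra! hlarge
  obtain ⟨S, hS, hmax⟩ := exists_max_image {S | ∃ T, IsCharged H S T} card
    ⟨∅, by simpa using ⟨_, IsCharged.empty (by omega)⟩⟩
  obtain ⟨T, hT⟩ : ∃ T, IsCharged H S T := by simpa using hS
  have hSM : S = hubs H := by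
    by_contra hne
    obtain ⟨S', T', hT', hlt⟩ := hT.exists_card_lt hH hd hcover hlarge hne
    exact (hmax S' (by simpa using ⟨T', hT'⟩)).not_gt hlt
  have henclosed : enclosed H S = Sᶜ := by
    ext v
    simp only [hSM, mem_enclosed, mem_compl, mem_hubs, not_not, and_iff_left_iff_imp]
    intro hv w hw
    exact (hcover ((H.mem_neighborFinset v w).1 hw)).resolve_left (by simpa using hv)
  have hcharge := hT.card_le
  have := hlarge T hT.freshlyBuilt
  have := excess_mono (H := H) (subset_univ S)
  rw [henclosed, card_compl_add_card] at hcharge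
  omega

end FreshlyBuilt

/-! ### Independent vertices of minimum degree -/

section VertexCoverHubs

variable {V β : Type*} [Fintype V] [DecidableEq V] {H : SimpleGraph V} [DecidableRel H.Adj]
  {T : Finset V}

lemma closedNeighborhood_sdiff_eq_neighborhood (hcover : H.IsVertexCover (hubs H))
    (hT : ∀ v ∈ T, H.degree v = H.minDegree) : closedNeighborhood H T \ T = neighborhood H T := by
  rw [closedNeighborhood, union_sdiff_cancel_left]
  refine disjoint_left.2 fun v hv hvN => ?_
  exact mem_hubs.1 (neighborhood_subset_hubs hcover hT hvN) (hT v hv)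

lemma mem_neighborFinset_sdiff_closedNeighborhood (hcover : H.IsVertexCover (hubs H)) {v w : V}
    (hT : ∀ a ∈ insert v T, H.degree a = H.minDegree) (hvw : H.Adj v w)
    (hw : w ∉ neighborhood H T) : w ∈ H.neighborFinset v \ closedNeighborhood H T := by
  have hwhub := mem_hubs.1 (neighborhood_subset_hubs hcover hT
    (mem_neighborhood.2 ⟨v, mem_insert_self v T, hvw⟩))
  exact mem_sdiff.2 ⟨by simpa using hvw,
    fun h => (mem_union.1 h).elim (fun hwT => hwhub (hT w (mem_insert_of_mem hwT))) hw⟩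

lemma card_sdiff_closedNeighborhood_add_card_neighborhood (hcover : H.IsVertexCover (hubs H))
    {v : V} (hT : ∀ a ∈ insert v T, H.degree a = H.minDegree) :
    #(H.neighborFinset v \ closedNeighborhood H T) + #(neighborhood H T) =
      #(neighborhood H (insert v T)) := by
  have hD : H.neighborFinset v \ closedNeighborhood H T =
      H.neighborFinset v \ neighborhood H T := by
    rw [← closedNeighborhood_sdiff_eq_neighborhood hcover
      fun a ha => hT a (mem_insert_of_mem ha)]
    ext u
    have : u ∈ H.neighborFinset v → u ∉ T := fun hu huT => mem_hubs.1
      (neighborhood_subset_hubs hcover hT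
        (mem_neighborhood.2 ⟨v, mem_insert_self v T, by simpa using hu⟩))
      (hT u (mem_insert_of_mem huT))
    grind
  rw [hD, card_sdiff_add_card, neighborhood_insert]

lemma IsAnchored.exists_insert_of_mem_candidates [Fintype β] [DecidableEq β] {C : SimpleGraph β}
    {K : Finset β} {g h : V → β} (hg : IsAnchored H C K T g) {v w : V} (hv : v ∉ T)
    (hw : w ∈ H.neighborFinset v \ closedNeighborhood H T)
    (hinj : Set.InjOn h ↑((H.neighborFinset v \ closedNeighborhood H T).erase w))
    (hmem : ∀ u ∈ (H.neighborFinset v \ closedNeighborhood H T).erase w,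
      h u ∈ K \ ((closedNeighborhood H T \ T).erase v).image g) {x y : β}
    (hx : x ∈ (K \ ((closedNeighborhood H T \ T).erase v).image g) \
      ((H.neighborFinset v \ closedNeighborhood H T).erase w).image h)
    (hy : y ∈ candidates C (K ∪ T.image g) ((H.neighborFinset v).erase w)
      fun a => if a ∈ closedNeighborhood H T then g a else h a)
    (hxy : ¬ C.Adj x y) : ∃ g', IsAnchored H C K (Insert.insert v T) g' := by
  obtain ⟨hxK, hxh⟩ := mem_sdiff.1 hx
  obtain ⟨hyB, hyadj⟩ := mem_candidates.1 hy
  rw [mem_union, not_or] at hyB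
  have hval {u : V} (hu : u ≠ w) : Function.update h w x u = h u := Function.update_of_ne hu ..
  have : Function.update h w x w = x := Function.update_self ..
  have hxne : ∀ u ∈ H.neighborFinset v \ closedNeighborhood H T, u ≠ w → h u ≠ x :=
    fun u hu huw hux => hxh (hux ▸ mem_image_of_mem h (mem_erase.2 ⟨huw, hu⟩))
  refine hg.exists_insert hv (h := Function.update h w x) (fun a ha b hb hab => ?_)
    (fun u hu => ?_) hyB.1 hyB.2 (fun u hu => ?_) fun u hu => ?_
  · have := hinj (x₁ := a) (x₂ := b)
    grind
  · grind
  · have := hyadj u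
    grind
  · have := hyadj u
    grind

end VertexCoverHubs

namespace MinimalCounterexample

variable {V β : Type*} [Fintype V] [Fintype β] {H : SimpleGraph V} [DecidableRel H.Adj]
  {C : SimpleGraph β} (hc : MinimalCounterexample H C)

include hc

lemma card_hubs_lt_card : #(hubs H) < Fintype.card V := by
  have := card_hubs_le_excess (H := H)
  have := hc.minDegree_mul_deficiency_add_excess_lt
  omega

lemma card_hubs_le_minDegree_mul {f p : ℕ} (hp : p ≤ #(hubs H))
    (hp' : p ≤ H.minDegree * deficiency V C) (hf : C.indepNum < f + p) :
    #(hubs H) ≤ H.minDegree * f := by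
  have hhubs := card_hubs_le_excess (H := H)
  have hn := hc.minDegree_mul_deficiency_add_excess_lt
  have ht := hc.deficiency_pos
  rw [← hc.indepNum_add_deficiency] at hn
  obtain ⟨k, hk⟩ := Nat.exists_eq_add_of_le' hc.two_le_minDegree
  rw [hk] at hn hp' ⊢
  obtain hle | hle := le_total #(hubs H) ((k + 2) * deficiency V C)
  · have hf' : (k + 1) * deficiency V C ≤ f := by linarith
    nlinarith [Nat.mul_le_mul_left (k + 2) hf']
  · have hf' : #(hubs H) + 3 ≤ f + deficiency V C := by linarith
    nlinarith [Nat.mul_le_mul_left (k + 2) hf', Nat.mul_le_mul_left k hle]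

lemma card_hubs_le_card_candidates [DecidableEq V] [DecidableEq β] {K : Finset β}
    (hK : #K = C.indepNum) {T : Finset V} (hT : #T < deficiency V C) {v w : V}
    (hv : H.degree v = H.minDegree) (hvw : H.Adj v w) (g g' : V → β) :
    #(hubs H) ≤ #(candidates C (K ∪ T.image g) ((H.neighborFinset v).erase w) g') := by
  have hcount := hc.card_le_card_candidates_add_mul_indepNum (K ∪ T.image g)
    ((H.neighborFinset v).erase w) g'
  have hB := (card_union_le K (T.image g)).trans (Nat.add_le_add_left card_image_le _)
  have hN := hc.minDegree_mul_card_add_excess_lt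
  have hs := card_hubs_le_excess (H := H)
  rw [card_erase_of_mem (by simpa using hvw), card_neighborFinset_eq_degree, hv] at hcount
  obtain ⟨k, hk⟩ := Nat.exists_eq_add_of_le' hc.two_le_minDegree
  rw [show H.minDegree - 1 = k + 1 by omega] at hcount
  rw [hk, ← hc.indepNum_add_deficiency] at hN
  nlinarith

section VertexCoverHubs

variable (hcover : H.IsVertexCover (hubs H))

include hcover

lemma hubs_nonempty : (hubs H).Nonempty := by
  have := hc.two_le_minDegree
  obtain ⟨v⟩ := hc.nonempty_left
  obtain ⟨w, hvw⟩ := exists_adj_of_minDegree_pos (H := H) (by omega) v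
  obtain hv | hw := hcover hvw
  · exact ⟨v, hv⟩
  · exact ⟨w, hw⟩

lemma exists_card_eq_card_interedges_compl_add_lt [DecidableEq V] {f : ℕ} (hf : f ≤ #(hubs H))
    (hf' : #(hubs H) ≤ H.minDegree * f) : ∃ W : Finset V, #W = f ∧
      f + #(H.interedges Wᶜ Wᶜ) + Fintype.card V < #(H.interedges univ univ) + 2 := by
  obtain ⟨W, -, hW, hWe⟩ := exists_subset_card_mul_card_interedges_compl_le hcover hf
  refine ⟨W, hW, ?_⟩
  by_contra! hle
  have hm := (hc.hubs_nonempty hcover).card_pos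
  have hQ := card_interedges_univ_univ_eq_add_excess (H := H)
  have hs := card_hubs_le_excess (H := H)
  obtain ⟨k, hk⟩ := Nat.exists_eq_add_of_le hf
  rw [show #(hubs H) - f = k by omega] at hWe
  have hupper := Nat.mul_le_mul_left #(hubs H) hle
  have hlower : f * (H.minDegree * Fintype.card V + #(hubs H)) ≤
      f * #(H.interedges univ univ) := Nat.mul_le_mul_left _ (by omega)
  have hmn := Nat.mul_le_mul_right (Fintype.card V) hf'
  have hsplit : #(hubs H) * #(H.interedges univ univ) =
      f * #(H.interedges univ univ) + k * #(H.interedges univ univ) := by rw [hk]; ring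
  nlinarith

lemma false_of_complete_bipartite_of_isVertexCover {X Y : Finset β}
    (hXY : ∀ x ∈ X, ∀ y ∈ Y, C.Adj x y) (hX : #(hubs H) ≤ H.minDegree * #X)
    (hY : #(hubs H) ≤ #Y) : False := by
  classical
  obtain ⟨X', hX'X, hX'⟩ := exists_subset_card_eq (min_le_left #X #(hubs H))
  obtain ⟨Y', hY'Y, hY'⟩ := exists_subset_card_eq hY
  have hd := hc.two_le_minDegree
  have hf : #(hubs H) ≤ H.minDegree * #X' := by
    obtain h | h := le_total #X #(hubs H)
    · rwa [hX', min_eq_left h]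
    · rw [hX', min_eq_right h]
      exact Nat.le_mul_of_pos_left _ (by omega)
  have hhubs := hc.hubs_nonempty hcover
  have hX'pos : 0 < #X' := Nat.pos_of_mul_pos_left (hhubs.card_pos.trans_le hf)
  obtain ⟨W, hW, hWe⟩ := hc.exists_card_eq_card_interedges_compl_add_lt hcover
    (hX' ▸ min_le_right #X #(hubs H)) hf
  have hindep := card_interedges_compl_eq_zero hcover
  have hcardW := card_add_card_compl W
  have hcard := card_add_card_compl (hubs H)
  have hbound := hc.card_le_of_complete_bipartite
    (fun x hx y hy => hXY x (hX'X hx) y (hY'Y hy)) (card_pos.1 (hW ▸ hX'pos)) hhubs hW.le hY'.ge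
    (m := max #(H.interedges Wᶜ Wᶜ) (#Wᶜ - 1)) (m' := #(hubs H)ᶜ - 1)
    (by omega) (by omega) (le_max_left ..) (by omega)
  have hN := hc.minDegree_mul_card_add_excess_lt
  have hQ := card_interedges_univ_univ_eq_add_excess (H := H)
  have hn := hc.card_hubs_lt_card
  have h2n : 2 * Fintype.card V ≤ H.minDegree * Fintype.card V := Nat.mul_le_mul_right _ hd
  omega

lemma exists_isAnchored_insert_of_isVertexCover [DecidableEq V] {K : Finset β}
    (hK : C.IsNIndepSet C.indepNum K) {T : Finset V} {g : V → β} (hg : IsAnchored H C K T g)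
    (hT : ∀ v ∈ T, H.degree v = H.minDegree) (hTt : #T < deficiency V C) {v w : V}
    (hv : H.degree v = H.minDegree) (hvw : H.Adj v w) (hw : w ∉ neighborhood H T) :
    ∃ g', IsAnchored H C K (insert v T) g' := by
  classical
  by_contra hno
  have := hc.nonempty_right
  have hvT : v ∉ T := fun hvT => hw (mem_neighborhood.2 ⟨v, hvT, hvw⟩)
  have hT' : ∀ a ∈ insert v T, H.degree a = H.minDegree := by simpa [hv] using hT
  have hhubs := neighborhood_subset_hubs hcover hT'
  have hwD := mem_neighborFinset_sdiff_closedNeighborhood hcover hT' hvw hw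
  have hp := card_sdiff_closedNeighborhood_add_card_neighborhood hcover hT'
  have hp_hubs := card_le_card hhubs
  have hp_mul : #(neighborhood H (insert v T)) ≤ H.minDegree * deficiency V C := by
    refine (card_neighborhood_le fun a ha => (hT' a ha).le).trans (Nat.mul_le_mul_left _ ?_)
    rwa [card_insert_of_notMem hvT]
  have hF₀ := le_card_sdiff (((closedNeighborhood H T \ T).erase v).image g) K
  have hbdry : #(((closedNeighborhood H T \ T).erase v).image g) ≤ #(neighborhood H T) :=
    card_image_le.trans <|
      card_le_card ((erase_subset ..).trans closedNeighborhood_sdiff_subset)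
  have hDpos := card_pos.2 ⟨w, hwD⟩
  have hDw := card_erase_of_mem hwD
  rw [hK.card_eq] at hF₀
  have hroom : #((H.neighborFinset v \ closedNeighborhood H T).erase w) ≤
      #(K \ ((closedNeighborhood H T \ T).erase v).image g) := by
    have hn := hc.minDegree_mul_deficiency_add_excess_lt
    have h2t := Nat.mul_le_mul_right (deficiency V C) hc.two_le_minDegree
    have hs := card_hubs_le_excess (H := H)
    have hdef := hc.indepNum_add_deficiency
    omega
  obtain ⟨h, hhmem, hinj⟩ := exists_forall_mem_injOn
    (T := (H.neighborFinset v \ closedNeighborhood H T).erase w)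
    (A := fun _ => K \ ((closedNeighborhood H T \ T).erase v).image g) fun _ _ => hroom
  have hF := le_card_sdiff (((H.neighborFinset v \ closedNeighborhood H T).erase w).image h)
    (K \ ((closedNeighborhood H T \ T).erase v).image g)
  have himage := card_image_le (s := (H.neighborFinset v \ closedNeighborhood H T).erase w) (f := h)
  exact hc.false_of_complete_bipartite_of_isVertexCover hcover
    (fun x hx y hy => by_contra fun hxy =>
      hno (hg.exists_insert_of_mem_candidates hvT hwD hinj hhmem hx hy hxy))
    (hc.card_hubs_le_minDegree_mul hp_hubs hp_mul (by omega))
    (hc.card_hubs_le_card_candidates hK.card_eq hTt hv hvw ..)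

end VertexCoverHubs

lemma exists_adj_degree_eq_minDegree :
    ∃ v w, H.Adj v w ∧ H.degree v = H.minDegree ∧ H.degree w = H.minDegree := by
  classical
  by_contra! hno
  have hcover : H.IsVertexCover (hubs H) := fun v w hvw => by
    have := hno v w hvw
    simp only [mem_coe, mem_hubs]
    tauto
  have hd := hc.two_le_minDegree
  obtain ⟨K, hK⟩ := C.exists_isNIndepSet_indepNum
  obtain ⟨y⟩ := hc.nonempty_right
  have hbuild (T : Finset V) (hT : FreshlyBuilt H T) : (∀ v ∈ T, H.degree v = H.minDegree) ∧
      #T < deficiency V C ∧ ∃ g, IsAnchored H C K T g := by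
    induction hT with
    | empty => exact ⟨by simp, hc.deficiency_pos, fun _ => y, .empty _⟩
    | insert _ hv hvw hw ih =>
      obtain ⟨hT, hTt, g, hg⟩ := ih
      obtain ⟨g', hg'⟩ :=
        hc.exists_isAnchored_insert_of_isVertexCover hcover hK hg hT hTt hv hvw hw
      refine ⟨by simpa [hv] using hT, ?_, g', hg'⟩
      by_contra! hle
      exact hc.false_of_isAnchored hK hg' hle
  obtain ⟨T, hT, hcard⟩ := exists_freshlyBuilt_card_le hc.connected hd hcover
  have hmul := Nat.mul_le_mul_left H.minDegree (hbuild T hT).2.1.le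
  have hn := hc.minDegree_mul_deficiency_add_excess_lt
  omega

lemma three_mul_lt_card :
    3 * ((H.minDegree - 1) * deficiency V C + excess H univ + 3) < Fintype.card V := by
  obtain ⟨v, w, hvw, hv, hw⟩ := hc.exists_adj_degree_eq_minDegree
  exact hc.three_mul_lt_card_of_adj_of_degree_eq_minDegree hvw hv hw

end MinimalCounterexample

/-! ### Minimum degree at least three -/

section Counting

variable {V : Type*} [Fintype V] [DecidableEq V] {H : SimpleGraph V} [DecidableRel H.Adj]
  {T : Finset V}

lemma minDegree_sub_one_mul_card_compl_closedNeighborhood_le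
    (hT : ∀ v ∉ T, H.degree v = H.minDegree →
      H.minDegree ≤ #(H.neighborFinset v ∩ closedNeighborhood H T) + 1) :
    (H.minDegree - 1) * #(closedNeighborhood H T)ᶜ ≤
      #(H.interedges (closedNeighborhood H T)ᶜ (closedNeighborhood H T \ T)) +
        (H.minDegree - 1) * excess H (closedNeighborhood H T)ᶜ := by
  rw [card_interedges_eq_sum_card_neighborFinset_inter, excess, mul_comm, ← smul_eq_mul,
    ← sum_const, mul_sum, ← sum_add_distrib]
  refine sum_le_sum fun u hu => ?_
  rw [mem_compl] at hu
  by_cases hlow : H.degree u = H.minDegree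
  · have hsub : H.neighborFinset u ∩ closedNeighborhood H T ⊆
        H.neighborFinset u ∩ (closedNeighborhood H T \ T) := by
      intro w hw
      have : w ∉ T := fun hwT => hu
        (mem_closedNeighborhood.2
          (.inr ⟨w, hwT, ((H.mem_neighborFinset u w).1 (mem_inter.1 hw).1).symm⟩))
      grind
    have := card_le_card hsub
    have := hT u (fun huT => hu (subset_closedNeighborhood huT)) hlow
    omega
  · have := H.minDegree_le_degree u
    exact le_add_left (Nat.le_mul_of_pos_right _ (by omega))

lemma card_interedges_sdiff_compl_closedNeighborhood_le (hd : 2 ≤ H.minDegree)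
    (hT : ∀ v ∉ T, H.degree v = H.minDegree →
      H.minDegree ≤ #(H.neighborFinset v ∩ closedNeighborhood H T) + 1) :
    #(H.interedges (closedNeighborhood H T \ T) (closedNeighborhood H T)ᶜ) ≤
      #(closedNeighborhood H T \ T) +
        (H.minDegree - 1) * excess H (closedNeighborhood H T \ T) := by
  rw [card_interedges_eq_sum_card_neighborFinset_inter, excess, card_eq_sum_ones, mul_sum,
    ← sum_add_distrib]
  refine sum_le_sum fun p hp => ?_
  obtain ⟨hp, hpT⟩ := mem_sdiff.1 hp
  have hsplit := card_inter_add_card_sdiff (H.neighborFinset p) (closedNeighborhood H T)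
  rw [sdiff_eq_inter_compl, card_neighborFinset_eq_degree] at hsplit
  by_cases hlow : H.degree p = H.minDegree
  · have := hT p hpT hlow
    omega
  · obtain ⟨v, hv, hvp⟩ := (mem_closedNeighborhood.1 hp).resolve_left hpT
    have hpos : 0 < #(H.neighborFinset p ∩ closedNeighborhood H T) :=
      card_pos.2 ⟨v, mem_inter.2 ⟨by simpa using hvp.symm, subset_closedNeighborhood hv⟩⟩
    obtain ⟨x, hx⟩ := Nat.exists_eq_add_of_lt ((H.minDegree_le_degree p).lt_of_ne' hlow)
    obtain ⟨k, hk⟩ := Nat.exists_eq_add_of_le' hd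
    rw [show H.minDegree - 1 = k + 1 by omega, show H.degree p - H.minDegree = x + 1 by omega]
    nlinarith [Nat.zero_le (k * x)]

/-- Counts the edges between the vertices at distance one from `T` and those further away. -/
lemma minDegree_sub_one_mul_card_le (hd : 2 ≤ H.minDegree)
    (hT : ∀ v ∉ T, H.degree v = H.minDegree →
      H.minDegree ≤ #(H.neighborFinset v ∩ closedNeighborhood H T) + 1) :
    (H.minDegree - 1) * Fintype.card V ≤ (H.minDegree - 1) * #T +
      H.minDegree * #(closedNeighborhood H T \ T) + (H.minDegree - 1) * excess H univ := by
  have hU := minDegree_sub_one_mul_card_compl_closedNeighborhood_le hT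
  have hP := card_interedges_sdiff_compl_closedNeighborhood_le hd hT
  rw [card_interedges_comm] at hU
  have hexcess : excess H (closedNeighborhood H T \ T) + excess H (closedNeighborhood H T)ᶜ ≤
      excess H univ := by
    rw [excess, excess, ← sum_union (disjoint_compl_right.mono_left sdiff_subset)]
    exact excess_mono (subset_univ _)
  have hcard := card_sdiff_add_card_eq_card (subset_closedNeighborhood (H := H) (T := T))
  have hcard' := card_add_card_compl (closedNeighborhood H T)
  have hmul := Nat.mul_le_mul_left (H.minDegree - 1) hexcess
  obtain ⟨k, hk⟩ := Nat.exists_eq_add_of_le' hd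
  rw [show H.minDegree - 1 = k + 1 by omega] at hU hP hmul ⊢
  rw [← hcard', ← hcard, hk]
  linarith

end Counting

namespace MinimalCounterexample

variable {V β : Type*} [Fintype V] [Fintype β] {H : SimpleGraph V} [DecidableRel H.Adj]
  {C : SimpleGraph β} (hc : MinimalCounterexample H C)

include hc

lemma card_filter_card_filter_not_adj_lt_le [DecidableRel C.Adj] {F : Finset β} {m : ℕ}
    (hF : 2 * m ≤ #F) : #{y | #{x ∈ F | ¬ C.Adj y x} < m} ≤ C.indepNum := by
  classical
  refine IsIndepSet.card_le_indepNum fun y hy z hz _ hyz => ?_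
  simp only [coe_filter, mem_univ, true_and, Set.mem_ofPred_eq] at hy hz
  have hcover : F ⊆ {x ∈ F | ¬ C.Adj y x} ∪ {x ∈ F | ¬ C.Adj z x} := by
    intro x hx
    have := hc.not_adj_of_adj_adj hyz (c := x)
    grind
  have := (card_le_card hcover).trans (card_union_le _ _)
  omega

variable [DecidableEq V]

lemma two_mul_card_sdiff_closedNeighborhood_le [DecidableEq β] {K : Finset β}
    (hK : #K = C.indepNum) {T : Finset V} (hT : ∀ v ∈ T, H.degree v = H.minDegree)
    (hTt : #T < deficiency V C) {v : V} (hv : H.degree v = H.minDegree) (g : V → β) :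
    2 * #(H.neighborFinset v \ closedNeighborhood H T) ≤
      #(K \ ((closedNeighborhood H T \ T).erase v).image g) := by
  have himage : #(((closedNeighborhood H T \ T).erase v).image g) ≤ H.minDegree * #T :=
    card_image_le.trans <| (card_le_card <| (erase_subset ..).trans
      closedNeighborhood_sdiff_subset).trans (card_neighborhood_le fun a ha => (hT a ha).le)
  have hroom := le_card_sdiff (((closedNeighborhood H T \ T).erase v).image g) K
  have hdeg := card_le_card (sdiff_subset : H.neighborFinset v \ closedNeighborhood H T ⊆ _)
  have hlarge := hc.three_mul_lt_card
  have ht := hc.deficiency_pos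
  have hdef := hc.indepNum_add_deficiency
  rw [card_neighborFinset_eq_degree, hv] at hdeg
  have hK' : H.minDegree * #T + 2 * H.minDegree ≤ C.indepNum := by
    obtain ⟨k, hk⟩ := Nat.exists_eq_add_of_le' hc.two_le_minDegree
    rw [show H.minDegree - 1 = k + 1 by omega] at hlarge
    rw [hk]
    nlinarith [Nat.mul_le_mul_left (k + 2) hTt, Nat.mul_le_mul_left k ht]
  omega

lemma exists_isAnchored_insert_of_card_inter_add_two_le {K : Finset β}
    (hK : C.IsNIndepSet C.indepNum K) {T : Finset V} {g : V → β} (hg : IsAnchored H C K T g)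
    (hT : ∀ v ∈ T, H.degree v = H.minDegree) (hTt : #T < deficiency V C) {v : V}
    (hv : H.degree v = H.minDegree) (hvT : v ∉ T)
    (hinter : #(H.neighborFinset v ∩ closedNeighborhood H T) + 2 ≤ H.minDegree) :
    ∃ g', IsAnchored H C K (insert v T) g' := by
  classical
  have := hc.nonempty_right
  have hdef := hc.indepNum_add_deficiency
  have hd := hc.two_le_minDegree
  have hL := hc.card_filter_card_filter_not_adj_lt_le
    (F := K \ ((closedNeighborhood H T \ T).erase v).image g)
    (m := #(H.neighborFinset v \ closedNeighborhood H T))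
    (hc.two_mul_card_sdiff_closedNeighborhood_le hK.card_eq hT hTt hv g)
  set L : Finset β := {y | #{x ∈ K \ ((closedNeighborhood H T \ T).erase v).image g |
    ¬ C.Adj y x} < #(H.neighborFinset v \ closedNeighborhood H T)}
  have hcount := hc.card_le_card_candidates_add_mul_indepNum (K ∪ (T.image g ∪ L))
    (H.neighborFinset v ∩ closedNeighborhood H T) g
  have hB := card_union_le K (T.image g ∪ L)
  have hB' := card_union_le (T.image g) L
  have himage := card_image_le (s := T) (f := g)
  have hN := hc.minDegree_mul_card_add_excess_lt
  have h2t := Nat.mul_le_mul_right (deficiency V C) hd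
  have hmul := Nat.mul_le_mul_right C.indepNum hinter
  rw [← hdef, mul_add] at hN
  rw [add_mul] at hmul
  rw [hK.card_eq] at hB
  obtain ⟨y, hy⟩ := card_pos.1 (show 0 < #(candidates C (K ∪ (T.image g ∪ L))
    (H.neighborFinset v ∩ closedNeighborhood H T) g) by omega)
  obtain ⟨hyB, hyadj⟩ := mem_candidates.1 hy
  simp only [mem_union, not_or] at hyB
  obtain ⟨hyK, hyT, hyL⟩ := hyB
  obtain ⟨h, hh, hinj⟩ := exists_forall_mem_injOn fun _ _ => by simpa [L] using hyL
  exact hg.exists_insert hvT hinj (fun u hu => (mem_filter.1 (hh u hu)).1) hyK hyT hyadj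
    fun u hu huy => (mem_filter.1 (hh u hu)).2 huy.symm

omit [DecidableEq V] in
lemma minDegree_eq_two : H.minDegree = 2 := by
  classical
  by_contra hd
  replace hd : 3 ≤ H.minDegree := by
    have := hc.two_le_minDegree
    omega
  obtain ⟨K, hK⟩ := C.exists_isNIndepSet_indepNum
  obtain ⟨b⟩ := hc.nonempty_right
  obtain ⟨T, hT, hmax⟩ := exists_max_image
    {T | (∀ v ∈ T, H.degree v = H.minDegree) ∧ ∃ g, IsAnchored H C K T g} card
    ⟨∅, by simpa using ⟨_, IsAnchored.empty fun _ => b⟩⟩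
  obtain ⟨hlow, g, hg⟩ := (mem_filter_univ _).1 hT
  have hTt : #T < deficiency V C := by
    by_contra! hle
    exact hc.false_of_isAnchored hK hg hle
  have hsat : ∀ v ∉ T, H.degree v = H.minDegree →
      H.minDegree ≤ #(H.neighborFinset v ∩ closedNeighborhood H T) + 1 := by
    intro v hvT hv
    by_contra! hlt
    have := hmax (insert v T) (by simpa [hv] using ⟨hlow,
      hc.exists_isAnchored_insert_of_card_inter_add_two_le hK hg hlow hTt hv hvT (by omega)⟩)
    rw [card_insert_of_notMem hvT] at this
    omega
  have hcount := minDegree_sub_one_mul_card_le (by omega) hsat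
  have hP := (card_le_card closedNeighborhood_sdiff_subset).trans
    (card_neighborhood_le fun a ha => (hlow a ha).le)
  have hlarge := hc.three_mul_lt_card
  obtain ⟨r, hr⟩ := Nat.exists_eq_add_of_le' hd
  rw [show H.minDegree - 1 = r + 2 by omega] at hcount hlarge
  rw [hr] at hcount hP
  have hP' := Nat.mul_le_mul_left (r + 3) hP
  have hlarge' := Nat.mul_le_mul_left (r + 2) hlarge.le
  have hTt' := Nat.mul_le_mul_left ((r + 2) + (r + 3) * (r + 3)) hTt.le
  nlinarith [Nat.zero_le (r * deficiency V C), Nat.zero_le (r * (r * deficiency V C)),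
    Nat.zero_le (r * excess H univ)]

end MinimalCounterexample

/-! ### Minimum degree two -/

section SinglyAttached

variable {V : Type*} [Fintype V] [DecidableEq V]

lemma closedNeighborhood_insert_sdiff_subset {H : SimpleGraph V} [DecidableRel H.Adj]
    {T : Finset V} {v : V} : closedNeighborhood H (insert v T) \ insert v T ⊆
      (closedNeighborhood H T \ T).erase v ∪ (H.neighborFinset v \ T) := by
  intro u hu
  simp only [mem_sdiff, mem_closedNeighborhood, mem_union, mem_erase, mem_neighborFinset] at hu ⊢
  grind

/-- A set of vertices of minimum degree in which no outside vertex has two neighbours. The two size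
bounds are what the embedding of `T` and `N(T)` requires; `k` is the target size, which may be
overshot by one because two vertices can be added in one step. -/
structure IsSinglyAttached (H : SimpleGraph V) [DecidableRel H.Adj] (k : ℕ) (T : Finset V) :
    Prop where
  degree_eq : ∀ v ∈ T, H.degree v = H.minDegree
  card_inter_le : ∀ u ∉ T, #(H.neighborFinset u ∩ T) ≤ 1
  card_sdiff_le : #(closedNeighborhood H T \ T) ≤ 3 * excess H univ + 2
  card_le : #T ≤ k + 1

/-- The vertices at distance one from `T` whose degree exceeds the minimum degree. -/
def boundaryHubs (H : SimpleGraph V) [DecidableRel H.Adj] (T : Finset V) : Finset V :=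
  hubs H ∩ (closedNeighborhood H T \ T)

variable {H : SimpleGraph V} [DecidableRel H.Adj] {k : ℕ} {S T : Finset V} {u v : V}

lemma mem_closedNeighborhood_sdiff :
    u ∈ closedNeighborhood H T \ T ↔ u ∉ T ∧ ∃ v ∈ T, H.Adj v u := by
  rw [mem_sdiff, mem_closedNeighborhood]
  tauto

lemma card_neighborhood_sdiff_add_card_le (hS : S ⊆ closedNeighborhood H T \ T) :
    #(neighborhood H S \ T) + #S ≤ H.minDegree * #S + excess H S := by
  have hsub : neighborhood H S \ T ⊆ S.biUnion fun u => H.neighborFinset u \ T := by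
    intro w hw
    simp only [mem_sdiff, mem_neighborhood] at hw
    simp only [mem_biUnion, mem_sdiff, mem_neighborFinset]
    grind
  have hlt (u : V) (hu : u ∈ S) : #(H.neighborFinset u \ T) + 1 ≤ H.degree u := by
    obtain ⟨-, x, hx, hxu⟩ := mem_closedNeighborhood_sdiff.1 (hS hu)
    rw [← card_neighborFinset_eq_degree]
    refine card_lt_card (sdiff_subset.ssubset_of_mem_notMem
      ((H.mem_neighborFinset u x).2 hxu.symm) fun h => (mem_sdiff.1 h).2 hx)
  calc #(neighborhood H S \ T) + #S
      ≤ ∑ u ∈ S, (#(H.neighborFinset u \ T) + 1) := by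
        rw [sum_add_distrib, ← card_eq_sum_ones]
        exact Nat.add_le_add_right ((card_le_card hsub).trans card_biUnion_le) _
    _ ≤ ∑ u ∈ S, H.degree u := sum_le_sum hlt
    _ = _ := sum_degree_eq_minDegree_mul_add_excess S

lemma neighborFinset_subset_insert (hd : H.degree v = 2) (hv : v ∈ closedNeighborhood H T \ T)
    (hvu : H.Adj v u) (hu : u ∉ T) :
    H.neighborFinset v ⊆ insert u T := by
  obtain ⟨-, x, hx, hxv⟩ := mem_closedNeighborhood_sdiff.1 hv
  have hsub : {u, x} ⊆ H.neighborFinset v := by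
    simp [insert_subset_iff, hvu, hxv.symm]
  rw [← eq_of_subset_of_card_le hsub (by
    rw [card_neighborFinset_eq_degree, hd, card_pair (ne_of_mem_of_not_mem hx hu).symm])]
  grind

lemma card_neighborhood_boundaryHubs_sdiff_le (hd : H.minDegree = 2) :
    #(neighborhood H (boundaryHubs H T) \ T) ≤ 2 * excess H univ := by
  have hcard := card_neighborhood_sdiff_add_card_le (T := T) (S := boundaryHubs H T)
    inter_subset_right
  have : #(boundaryHubs H T) ≤ excess H univ :=
    (card_le_card inter_subset_left).trans card_hubs_le_excess
  have := excess_mono (H := H) (subset_univ (boundaryHubs H T))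
  rw [hd] at hcard
  omega

namespace IsSinglyAttached

lemma empty : IsSinglyAttached H k ∅ := by
  constructor <;> simp [closedNeighborhood, neighborhood]

lemma insert (hT : IsSinglyAttached H k T) (hv : H.degree v = H.minDegree) (hTk : #T ≤ k)
    (hdisj : ∀ u ∉ T, H.Adj v u → u ∉ closedNeighborhood H T)
    (hcard : #((closedNeighborhood H T \ T).erase v) + #(H.neighborFinset v \ T) ≤
      3 * excess H univ + 2) : IsSinglyAttached H k (insert v T) where
  degree_eq := by
    have := hT.degree_eq
    grind
  card_inter_le u hu := by
    rw [mem_insert, not_or] at hu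
    by_cases hvu : H.Adj v u
    · have hempty : H.neighborFinset u ∩ T = ∅ := by
        refine eq_empty_of_forall_notMem fun x hx => hdisj u hu.2 hvu ?_
        rw [mem_inter, mem_neighborFinset] at hx
        exact mem_closedNeighborhood.2 (.inr ⟨x, hx.2, hx.1.symm⟩)
      rw [inter_insert_of_mem (by simpa using hvu.symm), hempty]
      simp
    · rw [inter_insert_of_notMem (by simpa [adj_comm] using hvu)]
      exact hT.card_inter_le u hu.2
  card_sdiff_le := (card_le_card closedNeighborhood_insert_sdiff_subset).trans
    ((card_union_le _ _).trans hcard)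
  card_le := (card_insert_le v T).trans (Nat.succ_le_succ hTk)

lemma insert_insert (hT : IsSinglyAttached H k T) (hu : H.degree u = H.minDegree)
    (hv : H.degree v = H.minDegree) (hTk : #T < k) (hNu : H.neighborFinset u ⊆ Insert.insert v T)
    (hNv : H.neighborFinset v ⊆ Insert.insert u T) :
    IsSinglyAttached H k (Insert.insert u (Insert.insert v T)) where
  degree_eq := by
    have := hT.degree_eq
    grind
  card_inter_le w hw := by
    have hwu : w ∉ H.neighborFinset u := fun h => by grind
    have hwv : w ∉ H.neighborFinset v := fun h => by grind
    rw [mem_neighborFinset, adj_comm, ← mem_neighborFinset] at hwu hwv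
    rw [inter_insert_of_notMem hwu, inter_insert_of_notMem hwv]
    exact hT.card_inter_le w (by grind)
  card_sdiff_le := by
    refine (card_le_card fun w hw => ?_).trans hT.card_sdiff_le
    rw [mem_closedNeighborhood_sdiff] at hw ⊢
    simp only [← mem_neighborFinset] at hw ⊢
    grind
  card_le := by
    have := card_insert_le u (Insert.insert v T)
    have := card_insert_le v T
    omega

lemma neighborFinset_subset_union_boundaryHubs (hT : Maximal (IsSinglyAttached H k) T)
    (hTk : #T < k) (hd : H.minDegree = 2) (hv : v ∈ closedNeighborhood H T \ T)
    (hdeg : H.degree v = H.minDegree) : H.neighborFinset v ⊆ T ∪ boundaryHubs H T := by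
  intro u hvu
  by_contra hu
  rw [mem_union, not_or] at hu
  rw [mem_neighborFinset] at hvu
  have hvT := (mem_sdiff.1 hv).2
  have hNv := neighborFinset_subset_insert (hdeg.trans hd) hv hvu hu.1
  by_cases hucl : u ∈ closedNeighborhood H T
  · have hudeg : H.degree u = H.minDegree := by
      have := mem_hubs (H := H) (v := u)
      have := hu.2
      grind [boundaryHubs]
    have hNu := neighborFinset_subset_insert (hudeg.trans hd) (mem_sdiff.2 ⟨hucl, hu.1⟩)
      hvu.symm hvT
    exact hvT (hT.2 (hT.1.insert_insert hudeg hdeg hTk hNu hNv)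
      ((subset_insert v T).trans (subset_insert u _)) (by simp))
  · have huniq : H.neighborFinset v \ T ⊆ {u} := by grind
    have hcard := card_le_card huniq
    have hpos := card_pos.2 ⟨v, hv⟩
    have herase := card_erase_of_mem hv
    have hsdiff := hT.1.card_sdiff_le
    rw [card_singleton] at hcard
    refine hvT (hT.2 (hT.1.insert hdeg hTk.le (fun w hw hvw => ?_) (by omega))
      (subset_insert v T) (mem_insert_self v T))
    rwa [mem_singleton.1 (huniq (mem_sdiff.2 ⟨(H.mem_neighborFinset v w).2 hvw, hw⟩))]

lemma mem_neighborhood_boundaryHubs (hT : Maximal (IsSinglyAttached H k) T)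
    (hTk : #T < k) (hd : H.minDegree = 2) (hv : v ∈ closedNeighborhood H T \ T)
    (hdeg : H.degree v = H.minDegree) : v ∈ neighborhood H (boundaryHubs H T) := by
  have hsub := neighborFinset_subset_union_boundaryHubs hT hTk hd hv hdeg
  have hlt : #(H.neighborFinset v ∩ T) < #(H.neighborFinset v) := by
    rw [card_neighborFinset_eq_degree, hdeg, hd]
    exact Nat.lt_succ_of_le (hT.1.card_inter_le v (mem_sdiff.1 hv).2)
  obtain ⟨u, hu, huT⟩ := exists_mem_notMem_of_card_lt_card hlt
  have := hsub hu
  exact mem_neighborhood.2 ⟨u, by grind, ((H.mem_neighborFinset v u).1 hu).symm⟩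

lemma card_sdiff_le_three_mul (hT : Maximal (IsSinglyAttached H k) T) (hTk : #T < k)
    (hd : H.minDegree = 2) : #(closedNeighborhood H T \ T) ≤ 3 * excess H univ := by
  have hcover : closedNeighborhood H T \ T ⊆ hubs H ∪ neighborhood H (boundaryHubs H T) \ T := by
    intro v hv
    have := mem_neighborhood_boundaryHubs hT hTk hd hv
    have := mem_hubs (H := H) (v := v)
    grind
  have := (card_le_card hcover).trans (card_union_le _ _)
  have := card_hubs_le_excess (H := H)
  have := card_neighborhood_boundaryHubs_sdiff_le (T := T) hd
  omega

lemma mem_of_notMem_hubs (hT : Maximal (IsSinglyAttached H k) T) (hTk : #T < k)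
    (hd : H.minDegree = 2) (hv : v ∉ hubs H) (hvN : v ∉ neighborhood H (boundaryHubs H T)) :
    v ∈ T := by
  have hdeg : H.degree v = H.minDegree := by simpa using hv
  by_contra hvT
  have hvcl : v ∉ closedNeighborhood H T \ T :=
    fun h => hvN (mem_neighborhood_boundaryHubs hT hTk hd h hdeg)
  have hcard := card_sdiff_le_three_mul hT hTk hd
  have hdeg_le := card_le_card (sdiff_subset : H.neighborFinset v \ T ⊆ _)
  rw [card_neighborFinset_eq_degree, hdeg, hd] at hdeg_le
  rw [← erase_eq_of_notMem hvcl] at hcard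
  refine hvT (hT.2 (hT.1.insert hdeg hTk.le (fun u hu hvu hucl => ?_) (by omega))
    (subset_insert v T) (mem_insert_self v T))
  have hub := mem_sdiff.2 ⟨hucl, hu⟩
  by_cases hudeg : H.degree u = H.minDegree
  · have := neighborFinset_subset_union_boundaryHubs hT hTk hd hub hudeg
      ((H.mem_neighborFinset u v).2 hvu.symm)
    grind [boundaryHubs]
  · exact hvN (mem_neighborhood.2 ⟨u, mem_inter.2 ⟨mem_hubs.2 hudeg, hub⟩, hvu.symm⟩)

lemma card_le_card_add (hT : Maximal (IsSinglyAttached H k) T) (hTk : #T < k)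
    (hd : H.minDegree = 2) : Fintype.card V ≤ #T + 3 * excess H univ := by
  have hcover : univ ⊆ T ∪ (hubs H ∪ neighborhood H (boundaryHubs H T) \ T) := by
    intro v _
    have := mem_of_notMem_hubs (v := v) hT hTk hd
    grind
  have hV := card_le_card hcover
  have := card_union_le T (hubs H ∪ neighborhood H (boundaryHubs H T) \ T)
  have := card_union_le (hubs H) (neighborhood H (boundaryHubs H T) \ T)
  have := card_hubs_le_excess (H := H)
  have := card_neighborhood_boundaryHubs_sdiff_le (T := T) hd
  rw [card_univ] at hV
  omega

end IsSinglyAttached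

end SinglyAttached

lemma IsPackingOn.exists_isAnchored {V β : Type*} [Fintype V] [DecidableEq V] [Nonempty β]
    {H : SimpleGraph V} [DecidableRel H.Adj] {C : SimpleGraph β} [DecidableRel C.Adj]
    {K : Finset β} {T : Finset V} {g : V → β} (hg : IsPackingOn H C T g)
    (hgK : ∀ a ∈ T, g a ∉ K) (huniq : ∀ u ∉ T, #(H.neighborFinset u ∩ T) ≤ 1)
    (hroom : ∀ a ∈ T, #(closedNeighborhood H T \ T) ≤ #{x ∈ K | ¬ C.Adj (g a) x}) :
    ∃ g', IsAnchored H C K T g' := by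
  obtain ⟨h, hh, hinj⟩ := exists_forall_mem_injOn (T := closedNeighborhood H T \ T)
    (A := fun u => {x ∈ K | ∀ a ∈ T, H.Adj a u → ¬ C.Adj (g a) x}) <| by
    intro u hu
    obtain ⟨huT, a, ha, hau⟩ := mem_closedNeighborhood_sdiff.1 hu
    refine (hroom a ha).trans (card_le_card fun x hx => ?_)
    rw [mem_filter] at hx ⊢
    refine ⟨hx.1, fun b hb hbu => ?_⟩
    rw [card_le_one.1 (huniq u huT) b (by simp [hb, hbu.symm]) a (by simp [ha, hau.symm])]
    exact hx.2
  simp only [mem_filter] at hh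
  refine ⟨fun a => if a ∈ T then g a else h a, fun a ha b hb hab => ?_, fun a ha => ?_,
    fun a ha b hab => ?_⟩
  · have := hg.injOn (x₁ := a) (x₂ := b)
    have := hinj (x₁ := a) (x₂ := b)
    grind
  · grind
  · have := hg.not_adj a ha b
    have := mem_closedNeighborhood (H := H) (T := T) (u := b)
    grind

namespace MinimalCounterexample

variable {V β : Type*} [Fintype V] [Fintype β] {H : SimpleGraph V} [DecidableRel H.Adj]
  {C : SimpleGraph β} (hc : MinimalCounterexample H C)

include hc

lemma card_interedges_self_lt_sum_degree {T : Finset V} (hT : T.Nonempty) (hT' : T ≠ univ) :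
    #(H.interedges T T) < ∑ v ∈ T, H.degree v := by
  obtain ⟨a, ha, b, hb, hab⟩ := exists_adj_notMem_of_connected hc.connected hT hT'
  rw [← card_interedges_univ_right]
  refine card_lt_card ((H.interedges_mono Subset.rfl (subset_univ T)).ssubset_of_mem_notMem
    (H.mk_mem_interedges_iff.2 ⟨ha, mem_univ b, hab⟩) ?_)
  simp [mk_mem_interedges_iff, hb]

variable [DecidableEq V]

lemma card_interedges_self_le_of_isSinglyAttached {T : Finset V}
    (hT : IsSinglyAttached H (deficiency V C) T) (hle : deficiency V C ≤ #T)
    (hTu : T ≠ univ) : #(H.interedges T T) ≤ 2 * deficiency V C := by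
  have hlt := hc.card_interedges_self_lt_sum_degree
    (card_pos.1 (hc.deficiency_pos.trans_le hle)) hTu
  rw [sum_congr rfl hT.degree_eq, sum_const, hc.minDegree_eq_two, smul_eq_mul] at hlt
  obtain ⟨m, hm⟩ := even_card_interedges_self (H := H) T
  have := hT.card_le
  omega

lemma false_of_isSinglyAttached {T : Finset V} (hT : IsSinglyAttached H (deficiency V C) T)
    (hle : deficiency V C ≤ #T) : False := by
  classical
  obtain ⟨K, hK⟩ := C.exists_isNIndepSet_indepNum
  have := hc.nonempty_right
  have hd := hc.minDegree_eq_two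
  have hdef := hc.indepNum_add_deficiency
  have hlarge := hc.three_mul_lt_card
  have hN := hc.minDegree_mul_card_add_excess_lt
  have hTcard := hT.card_le
  rw [hd] at hlarge hN
  have hTu : T ≠ univ := by
    rintro rfl
    rw [card_univ] at hTcard
    omega
  have hroom : 2 * #(closedNeighborhood H T \ T) ≤ #K := by
    have := hT.card_sdiff_le
    have := (card_le_card closedNeighborhood_sdiff_subset).trans
      (card_neighborhood_le fun v hv => ((hT.degree_eq v hv).trans hd).le)
    rw [hK.card_eq]
    omega
  have hL := hc.card_filter_card_filter_not_adj_lt_le hroom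
  set L : Finset β := {y | #{x ∈ K | ¬ C.Adj y x} < #(closedNeighborhood H T \ T)}
  have hY : 2 * deficiency V C < #(K ∪ L)ᶜ := by
    have hcompl := card_add_card_compl (K ∪ L)
    have := card_union_le K L
    rw [hK.card_eq] at this
    omega
  have := hc.deficiency_pos
  obtain ⟨g, hgY, hg⟩ := hc.exists_isPackingOn T hTu _ (by omega)
    ((hc.card_interedges_self_le_of_isSinglyAttached hT hle hTu).trans_lt hY)
  simp only [mem_compl, mem_union, not_or] at hgY
  obtain ⟨g', hg'⟩ := hg.exists_isAnchored (fun a ha => (hgY a ha).1) hT.card_inter_le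
    fun a ha => by simpa [L] using (hgY a ha).2
  exact hc.false_of_isAnchored hK hg' hle

end MinimalCounterexample

theorem not_minimalCounterexample {V β : Type*} [Fintype V] [Fintype β] {H : SimpleGraph V}
    [DecidableRel H.Adj] {C : SimpleGraph β} : ¬ MinimalCounterexample H C := by
  classical
  intro hc
  obtain ⟨T, hT⟩ := Set.Finite.exists_maximal
    (Set.toFinite {T | IsSinglyAttached H (deficiency V C) T}) ⟨∅, .empty⟩
  have hTk : #T < deficiency V C := by
    by_contra! hle
    exact hc.false_of_isSinglyAttached hT.1 hle
  have hcard := IsSinglyAttached.card_le_card_add hT hTk hc.minDegree_eq_two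
  have hlarge := hc.three_mul_lt_card
  rw [hc.minDegree_eq_two] at hlarge
  omega

/-! ### The Ramsey bound -/

lemma IsPackingOn.exists_of_comap {V β : Type*} {H : SimpleGraph V} {C : SimpleGraph β}
    [Nonempty β] {T : Finset V} {Y : Finset β} {g : T → Y}
    (hg : IsPackingOn (H.comap ((↑) : T → V)) (C.comap ((↑) : Y → β)) univ g) :
    ∃ g' : V → β, (∀ a ∈ T, g' a ∈ Y) ∧ IsPackingOn H C T g' := by
  have hext := Subtype.val_injective.extend_apply (fun a : T => (g a : β))
    fun _ => Classical.arbitrary β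
  refine ⟨_, fun a ha => hext ⟨a, ha⟩ ▸ (g ⟨a, ha⟩).2, fun a ha b hb hab => ?_,
    fun a ha b hb hab => ?_⟩
  · rw [hext ⟨a, ha⟩, hext ⟨b, hb⟩] at hab
    exact congrArg Subtype.val (hg.injOn (mem_coe.2 (mem_univ _)) (mem_coe.2 (mem_univ _))
      (Subtype.ext hab))
  · rw [hext ⟨a, ha⟩, hext ⟨b, hb⟩]
    exact hg.not_adj ⟨a, ha⟩ (mem_univ _) ⟨b, hb⟩ (mem_univ _) hab

theorem exists_isPackingOn_univ {V β : Type*} [Fintype V] [Fintype β] {H : SimpleGraph V}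
    [DecidableRel H.Adj] {C : SimpleGraph β} (hC : C.CliqueFree 3)
    (hcard : Fintype.card V ≤ Fintype.card β)
    (hedges : 2 * #H.edgeFinset < Fintype.card β) : ∃ g : V → β, IsPackingOn H C univ g := by
  classical
  induction hn : Fintype.card V using Nat.strong_induction_on generalizing V β with
  | _ n ih =>
    by_contra! hno
    refine not_minimalCounterexample (H := H) (C := C)
      ⟨hC, fun T hT Y hTY hY => ?_, hno, hcard,
        by rwa [card_interedges_univ_univ]⟩
    obtain ⟨y, -⟩ := card_pos.1 (Nat.zero_lt_of_lt hY)
    have : Nonempty β := ⟨y⟩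
    obtain ⟨g, hg⟩ := ih #T (hn ▸ (card_lt_iff_ne_univ T).2 hT)
      (H := H.comap ((↑) : T → V)) (C := C.comap ((↑) : Y → β))
      (hC.comap (Embedding.comap (.subtype _) C).isContained) (by simpa using hTY)
      (by rw [← card_interedges_univ_univ, card_interedges_comap_coe]; simpa using hY) (by simp)
    exact hg.exists_of_comap

lemma hasCopy_top_of_not_cliqueFree {β : Type*} {C : SimpleGraph β} {n : ℕ}
    (hC : ¬ C.CliqueFree n) : HasCopy (⊤ : SimpleGraph (Fin n)) C := by
  obtain ⟨f⟩ := (not_cliqueFree_iff_top_isContained n).1 hC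
  exact ⟨f.toHom, f.injective⟩

lemma IsPackingOn.hasCopy_compl {V β : Type*} [Fintype V] {H : SimpleGraph V} {C : SimpleGraph β}
    {g : V → β} (hg : IsPackingOn H C univ g) : HasCopy H Cᶜ := by
  have hinj : Function.Injective g := fun a b hab =>
    hg.injOn (mem_coe.2 (mem_univ a)) (mem_coe.2 (mem_univ b)) hab
  exact ⟨⟨g, fun {a b} hab => ⟨hinj.ne hab.ne, hg.not_adj a (mem_univ a) b (mem_univ b) hab⟩⟩, hinj⟩

theorem stmt_11_general {V : Type*} [Fintype V] (H : SimpleGraph V) [DecidableRel H.Adj] :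
    ramseyNumber (⊤ : SimpleGraph (Fin 3)) H ≤ max (Fintype.card V) (2 * #H.edgeFinset + 1) := by
  refine Nat.sInf_le fun C => ?_
  by_cases hC : C.CliqueFree 3
  · obtain ⟨g, hg⟩ := exists_isPackingOn_univ (H := H) hC (by simp) (by simp)
    exact .inr hg.hasCopy_compl
  · exact .inl (hasCopy_top_of_not_cliqueFree hC)

lemma card_le_two_mul_card_edgeFinset {V : Type*} [Fintype V] {H : SimpleGraph V}
    [DecidableRel H.Adj] (h : ∀ v, 0 < H.degree v) : Fintype.card V ≤ 2 * #H.edgeFinset := by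
  rw [← sum_degrees_eq_twice_card_edges, ← card_univ, card_eq_sum_ones]
  exact sum_le_sum fun v _ => h v

theorem stmt_11 (V : Type) [Fintype V] [DecidableEq V] (H : SimpleGraph V)
    [DecidableRel H.Adj] (h : ∀ v : V, 0 < H.degree v) :
    ramseyNumber (⊤ : SimpleGraph (Fin 3)) H ≤ 2 * H.edgeFinset.card + 1 :=
  (stmt_11_general H).trans
    (max_le ((card_le_two_mul_card_edgeFinset h).trans (Nat.le_succ _)) le_rfl)
end
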